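/- arXiv:1101.1936 — 3 statements merged into one kernel-verified Lean document; each statement's English description precedes it below -/
import Mathlib

section
/- Let R be a right artinian ring. If the φ-dimension of R (the supremum of φ(M) over all finitely generated right R-modules M) is finite, then the finitistic dimension of R is finite; in fact fin.dim(R) ≤ φ-dim(R). -/
open Module Function

universe u

variable (R : Type u) [Ring R]

/-- A finitely generated right `R`-module, encoded as a module over `Rᵐᵒᵖ`. -/
structure FGMod where
  carrier : Type u
  [isAddCommGroup : AddCommGroup carrier]
  [isModule : Module Rᵐᵒᵖ carrier]
  [isFinite : Module.Finite Rᵐᵒᵖ carrier]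

attribute [instance] FGMod.isAddCommGroup FGMod.isModule FGMod.isFinite

instance : CoeSort (FGMod R) (Type u) := ⟨FGMod.carrier⟩

variable {R}

/-- Isomorphism of f.g. right modules. -/
def FGMod.Iso (M N : FGMod R) : Prop := Nonempty (M ≃ₗ[Rᵐᵒᵖ] N)

/-- Direct sum. -/
def FGMod.prod (M N : FGMod R) : FGMod R := ⟨M × N⟩

/-- `M^k`, the direct sum of `k` copies of `M`. -/
def FGMod.pow (M : FGMod R) (k : ℕ) : FGMod R := ⟨Fin k → M⟩

/-- `N` is (isomorphic to) a direct summand of `M`. -/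
def FGMod.IsSummand (N M : FGMod R) : Prop :=
  ∃ A B : Submodule Rᵐᵒᵖ M, IsCompl A B ∧ Nonempty (N ≃ₗ[Rᵐᵒᵖ] A)

/-- `M` is indecomposable. -/
def FGMod.Indec (M : FGMod R) : Prop :=
  Nontrivial M ∧ ∀ A B : Submodule Rᵐᵒᵖ M, IsCompl A B → A = ⊥ ∨ B = ⊥

/-- `M` is projective. -/
def FGMod.Proj (M : FGMod R) : Prop := Module.Projective Rᵐᵒᵖ M

/-- `f : P → M` is a projective cover: `P` projective, `f` surjective with superfluous kernel. -/
def IsProjCover (M P : FGMod R) (f : P →ₗ[Rᵐᵒᵖ] M) : Prop :=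
  P.Proj ∧ Surjective f ∧ ∀ N : Submodule Rᵐᵒᵖ P, N ⊔ LinearMap.ker f = ⊤ → N = ⊤

/-- `N` is a (first) syzygy of `M`: the kernel of a projective cover of `M`. -/
def IsSyzygy (M N : FGMod R) : Prop :=
  ∃ (P : FGMod R) (f : P →ₗ[Rᵐᵒᵖ] M),
    IsProjCover M P f ∧ Nonempty (N ≃ₗ[Rᵐᵒᵖ] LinearMap.ker f)

/-- `N` is an `n`-th syzygy of `M`. -/
def IsSyzygyN : ℕ → FGMod R → FGMod R → Prop
  | 0, M, N => M.Iso N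
  | n+1, M, N => ∃ L, IsSyzygy M L ∧ IsSyzygyN n L N

/-- `M` has projective dimension at most `n`. -/
def HasPdLE : ℕ → FGMod R → Prop
  | 0, M => M.Proj
  | n+1, M => M.Proj ∨ ∃ N, IsSyzygy M N ∧ HasPdLE n N

/-- `M` has finite projective dimension. -/
def FinPd (M : FGMod R) : Prop := ∃ n, HasPdLE n M

/-- The projective dimension of `M` (junk value if infinite). -/
noncomputable def pdIT (M : FGMod R) : ℕ := sInf {n | HasPdLE n M}

variable (R)

/-- The Igusa–Todorov relations in the free abelian group on f.g. right modules:
`[A] - [B] - [C]` whenever `A ≅ B ⊕ C`, and `[P]` for `P` projective. -/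
def ITRel : Set (FreeAbelianGroup (FGMod R)) :=
  {x | ∃ A B C : FGMod R, Nonempty (A ≃ₗ[Rᵐᵒᵖ] (B × C : Type u)) ∧
        x = FreeAbelianGroup.of A - FreeAbelianGroup.of B - FreeAbelianGroup.of C} ∪
  {x | ∃ P : FGMod R, P.Proj ∧ x = FreeAbelianGroup.of P}

/-- The Igusa–Todorov group `K`. -/
def ITK := FreeAbelianGroup (FGMod R) ⧸ AddSubgroup.closure (ITRel R)

noncomputable instance : AddCommGroup (ITK R) :=
  QuotientAddGroup.Quotient.addCommGroup _

/-- The class `[M]` in `K`. -/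
noncomputable def ITcls (M : FGMod R) : ITK R := QuotientAddGroup.mk (FreeAbelianGroup.of M)

/-- `⟨M⟩`: the subgroup of `K` generated by the indecomposable non-projective
direct summands of `M`. -/
noncomputable def ITgen (M : FGMod R) : AddSubgroup (ITK R) :=
  AddSubgroup.closure
    {x | ∃ N : FGMod R, N.IsSummand M ∧ N.Indec ∧ ¬N.Proj ∧ x = ITcls R N}

/-- The rank of a subgroup of `K`. -/
noncomputable def rkIT (H : AddSubgroup (ITK R)) : ℕ :=
  Module.finrank ℤ (AddSubgroup.toIntSubmodule H)

/-- `OmK` is a syzygy endomorphism of `K`: a group endomorphism sending `[M]` to `[ΩM]`. -/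
def IsSyzygyEnd (OmK : AddMonoid.End (ITK R)) : Prop :=
  ∀ M N : FGMod R, IsSyzygy M N → OmK (ITcls R M) = ITcls R N

/-- The Igusa–Todorov function `φ`: the least `n` such that the rank of
`Ω^i⟨M⟩` equals that of `Ω^n⟨M⟩` for all `i ≥ n`. -/
noncomputable def phiIT (OmK : AddMonoid.End (ITK R)) (M : FGMod R) : ℕ :=
  sInf {n | ∀ i, n ≤ i →
    rkIT R ((ITgen R M).map ((OmK ^ i : AddMonoid.End (ITK R)) : ITK R →+ ITK R))
      = rkIT R ((ITgen R M).map ((OmK ^ n : AddMonoid.End (ITK R)) : ITK R →+ ITK R))}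

/-- The second Igusa–Todorov function `ψ`. -/
noncomputable def psiIT (OmK : AddMonoid.End (ITK R)) (M : FGMod R) : ℕ :=
  phiIT R OmK M + sSup {d | ∃ N X : FGMod R, IsSyzygyN (phiIT R OmK M) M N ∧
      X.IsSummand N ∧ FinPd X ∧ d = pdIT X}

/-- The socle of a module: the sum of its simple submodules. -/
def socleIT (M : FGMod R) : Submodule Rᵐᵒᵖ M :=
  sSup {S : Submodule Rᵐᵒᵖ M | IsSimpleModule Rᵐᵒᵖ S}


/-- Length of a finitely generated module as a natural number. -/
noncomputable def lenIT {R : Type u} [Ring R] (M : FGMod R) : ℕ := (Module.length Rᵐᵒᵖ M).toNat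

section helpers

set_option linter.unusedSectionVars false

variable {R : Type u} [Ring R] [IsArtinianRing Rᵐᵒᵖ]

lemma lenIT_cast (M : FGMod R) : (lenIT M : ℕ∞) = Module.length Rᵐᵒᵖ M :=
  ENat.natCast_toNat (Module.length_ne_top)

lemma lenIT_le_of_surj {M N : FGMod R} (f : M →ₗ[Rᵐᵒᵖ] N) (hf : Surjective f) :
    lenIT N ≤ lenIT M := by
  have := Module.length_le_of_surjective f hf
  rw [← lenIT_cast, ← lenIT_cast] at this
  exact_mod_cast this

lemma lenIT_le_of_inj {M N : FGMod R} (f : M →ₗ[Rᵐᵒᵖ] N) (hf : Injective f) :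
    lenIT M ≤ lenIT N := by
  have := Module.length_le_of_injective f hf
  rw [← lenIT_cast, ← lenIT_cast] at this
  exact_mod_cast this

lemma lenIT_iso {M N : FGMod R} (e : M ≃ₗ[Rᵐᵒᵖ] N) : lenIT M = lenIT N :=
  le_antisymm (lenIT_le_of_inj e.toLinearMap e.injective)
    (lenIT_le_of_surj e.toLinearMap e.surjective)

lemma lenIT_prod (M N : FGMod R) : lenIT (M.prod N) = lenIT M + lenIT N := by
  have := Module.length_prod Rᵐᵒᵖ M N
  have h : (lenIT (M.prod N) : ℕ∞) = lenIT M + lenIT N := by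
    rw [lenIT_cast, lenIT_cast, lenIT_cast]; exact this
  exact_mod_cast h

lemma inj_of_surj_of_lenIT {M N : FGMod R} (f : M →ₗ[Rᵐᵒᵖ] N) (hf : Surjective f)
    (h : lenIT M = lenIT N) : Injective f := by
  have h1 := Module.length_eq_add_of_exact (LinearMap.ker f).subtype f
    (Submodule.injective_subtype _) hf (LinearMap.exact_subtype_ker_map f)
  let Kf : FGMod R := ⟨LinearMap.ker f⟩
  have h2 : (lenIT M : ℕ∞) = lenIT Kf + lenIT N := by
    rw [lenIT_cast, lenIT_cast, lenIT_cast]; exact h1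
  have h3 : lenIT M = lenIT Kf + lenIT N := by exact_mod_cast h2
  have h4 : lenIT Kf = 0 := by omega
  have h5 : Module.length Rᵐᵒᵖ (LinearMap.ker f) = 0 := by
    have := lenIT_cast Kf
    rw [h4] at this
    exact this.symm
  rw [Module.length_eq_zero_iff] at h5
  rw [← LinearMap.ker_eq_bot]
  exact (Submodule.subsingleton_iff_eq_bot).mp h5

lemma cover_le {M P Q : FGMod R} {f : P →ₗ[Rᵐᵒᵖ] M} (hf : IsProjCover M P f)
    (hQ : Q.Proj) (g : Q →ₗ[Rᵐᵒᵖ] M) (hg : Surjective g) : lenIT P ≤ lenIT Q := by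
  have : Module.Projective Rᵐᵒᵖ Q := hQ
  obtain ⟨h, hh⟩ := Module.projective_lifting_property f g hf.2.1
  refine lenIT_le_of_surj h ?_
  rw [← LinearMap.range_eq_top]
  apply hf.2.2
  rw [eq_top_iff]
  intro p _
  obtain ⟨q, hq⟩ := hg (f p)
  have : p = h q + (p - h q) := by abel
  rw [this]
  refine Submodule.add_mem_sup ⟨q, rfl⟩ ?_
  rw [LinearMap.mem_ker, map_sub, sub_eq_zero, ← hq, ← hh]
  rfl

/-- The minimal length of a projective module surjecting onto `M`. -/
noncomputable def pcIT (M : FGMod R) : ℕ :=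
  sInf {k | ∃ (P : FGMod R) (f : P →ₗ[Rᵐᵒᵖ] M), P.Proj ∧ Surjective f ∧ lenIT P = k}

lemma pcIT_nonempty (M : FGMod R) :
    {k | ∃ (P : FGMod R) (f : P →ₗ[Rᵐᵒᵖ] M), P.Proj ∧ Surjective f ∧ lenIT P = k}.Nonempty := by
  obtain ⟨n, f, hf⟩ := Module.Finite.exists_fin' Rᵐᵒᵖ M
  let P : FGMod R := ⟨Fin n → Rᵐᵒᵖ⟩
  refine ⟨lenIT P, P, f, ?_, hf, rfl⟩
  change Module.Projective Rᵐᵒᵖ (Fin n → Rᵐᵒᵖ)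
  infer_instance

lemma pcIT_le {M P : FGMod R} (f : P →ₗ[Rᵐᵒᵖ] M) (hP : P.Proj) (hf : Surjective f) :
    pcIT M ≤ lenIT P := Nat.sInf_le ⟨P, f, hP, hf, rfl⟩

lemma exists_cover (M : FGMod R) : ∃ (P : FGMod R) (f : P →ₗ[Rᵐᵒᵖ] M), IsProjCover M P f := by
  obtain ⟨P, f, hP, hf, hlen⟩ := Nat.sInf_mem (pcIT_nonempty M)
  change lenIT P = pcIT M at hlen
  refine ⟨P, f, hP, hf, ?_⟩
  intro N hN
  have : Module.Projective Rᵐᵒᵖ P := hP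
  have hsurj : Surjective (f ∘ₗ N.subtype) := by
    intro m
    obtain ⟨p, rfl⟩ := hf m
    have hp : p ∈ N ⊔ LinearMap.ker f := by rw [hN]; trivial
    obtain ⟨a, ha, b, hb, rfl⟩ := Submodule.mem_sup.mp hp
    refine ⟨⟨a, ha⟩, ?_⟩
    rw [LinearMap.mem_ker] at hb
    simp [hb]
  obtain ⟨g0, hg0⟩ := Module.projective_lifting_property (f ∘ₗ N.subtype) f hsurj
  let g : Module.End Rᵐᵒᵖ P := N.subtype ∘ₗ g0
  have hg : ∀ p, f (g p) = f p := fun p => LinearMap.congr_fun hg0 p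
  have hgn : ∀ n p, f ((g ^ n) p) = f p := by
    intro n
    induction n with
    | zero => intro p; simp
    | succ n ih => intro p; rw [pow_succ', Module.End.mul_apply, hg, ih]
  obtain ⟨k, hk⟩ := Filter.eventually_atTop.mp
    (LinearMap.eventually_isCompl_ker_pow_range_pow g)
  have hc := hk (k + 1) (Nat.le_succ k)
  let Q : FGMod R := ⟨LinearMap.range (g ^ (k + 1))⟩
  have hQ : Q.Proj := by
    change Module.Projective Rᵐᵒᵖ (LinearMap.range (g ^ (k + 1)))
    refine Module.Projective.of_split (LinearMap.range (g ^ (k + 1))).subtype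
      (Submodule.projectionOnto _ _ hc.symm) ?_
    ext x
    simp
  have hle : pcIT M ≤ lenIT Q := by
    refine pcIT_le (f ∘ₗ (LinearMap.range (g ^ (k + 1))).subtype) hQ ?_
    intro m
    obtain ⟨p, rfl⟩ := hf m
    exact ⟨⟨(g ^ (k + 1)) p, ⟨p, rfl⟩⟩, hgn (k + 1) p⟩
  by_contra hNt
  have hlt : LinearMap.range (g ^ (k + 1)) ≠ ⊤ := by
    intro h
    apply hNt
    rw [eq_top_iff, ← h]
    rintro _ ⟨p, rfl⟩
    rw [pow_succ', Module.End.mul_apply]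
    exact (g0 _).2
  have h1 := Submodule.length_lt hlt
  have h2 : (lenIT Q : ℕ∞) < lenIT P := by
    rw [lenIT_cast, lenIT_cast]; exact h1
  have h3 : lenIT Q < lenIT P := by exact_mod_cast h2
  omega

lemma cover_len {M P : FGMod R} {f : P →ₗ[Rᵐᵒᵖ] M} (hf : IsProjCover M P f) :
    lenIT P = pcIT M := by
  refine le_antisymm ?_ (pcIT_le f hf.1 hf.2.1)
  obtain ⟨Q, g, hQ, hg, hlen⟩ := Nat.sInf_mem (pcIT_nonempty M)
  change lenIT Q = pcIT M at hlen
  rw [← hlen]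
  exact cover_le hf hQ g hg

lemma cover_prod {M N P Q : FGMod R} {f : P →ₗ[Rᵐᵒᵖ] M} {g : Q →ₗ[Rᵐᵒᵖ] N}
    (hf : IsProjCover M P f) (hg : IsProjCover N Q g) :
    IsProjCover (M.prod N) (P.prod Q) (LinearMap.prodMap f g) := by
  have : Module.Projective Rᵐᵒᵖ P := hf.1
  have : Module.Projective Rᵐᵒᵖ Q := hg.1
  refine ⟨?_, ?_, ?_⟩
  · change Module.Projective Rᵐᵒᵖ (P × Q)
    infer_instance
  · exact Function.Surjective.prodMap hf.2.1 hg.2.1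
  · intro (L : Submodule Rᵐᵒᵖ (P × Q)) hL
    have key : ∀ p q, ∃ a b, (a, b) ∈ L ∧ f a = f p ∧ g b = g q := by
      intro p q
      have hp : ((p, q) : P × Q) ∈ L ⊔ LinearMap.ker (LinearMap.prodMap f g) := by
        have : L ⊔ LinearMap.ker (LinearMap.prodMap f g) = ⊤ := hL
        rw [this]; trivial
      obtain ⟨⟨a, b⟩, ha, ⟨c, d⟩, hb, hab⟩ := Submodule.mem_sup.mp hp
      rw [LinearMap.mem_ker] at hb
      simp only [LinearMap.prodMap_apply, Prod.mk_eq_zero] at hb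
      simp only [Prod.mk_add_mk, Prod.mk.injEq] at hab
      refine ⟨a, b, ha, ?_, ?_⟩
      · rw [← hab.1, map_add, hb.1, add_zero]
      · rw [← hab.2, map_add, hb.2, add_zero]
    -- projection to the second factor is everything
    have h2 : L.map (LinearMap.snd Rᵐᵒᵖ P Q) = ⊤ := by
      apply hg.2.2
      rw [eq_top_iff]
      intro q _
      obtain ⟨a, b, hab, -, hb⟩ := key 0 q
      have : q = b + (q - b) := by abel
      rw [this]
      refine Submodule.add_mem_sup ⟨(a, b), hab, rfl⟩ ?_
      rw [LinearMap.mem_ker, map_sub, hb, sub_self]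
    -- the second injection lies in `L + (ker f) × 0`
    have h3 : (L ⊔ (LinearMap.ker f).map (LinearMap.inl Rᵐᵒᵖ P Q)).comap
        (LinearMap.inr Rᵐᵒᵖ P Q) = ⊤ := by
      apply hg.2.2
      rw [eq_top_iff]
      intro q _
      obtain ⟨a, b, hab, ha, hb⟩ := key 0 q
      have : q = b + (q - b) := by abel
      rw [this]
      refine Submodule.add_mem_sup ?_ ?_
      · change ((0, b) : P × Q) ∈ L ⊔ (LinearMap.ker f).map (LinearMap.inl Rᵐᵒᵖ P Q)
        have e : ((0, b) : P × Q) = (a, b) + (-a, 0) := by simp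
        rw [e]
        refine Submodule.add_mem_sup hab ⟨-a, ?_, rfl⟩
        change -a ∈ LinearMap.ker f
        rw [LinearMap.mem_ker, map_neg, ha, map_zero, neg_zero]
      · rw [LinearMap.mem_ker, map_sub, hb, sub_self]
    have h4 : L.comap (LinearMap.inl Rᵐᵒᵖ P Q) = ⊤ := by
      apply hf.2.2
      rw [eq_top_iff]
      intro p _
      obtain ⟨a, b, hab, ha, hb⟩ := key p 0
      have hb' : -b ∈ (L ⊔ (LinearMap.ker f).map (LinearMap.inl Rᵐᵒᵖ P Q)).comap
        (LinearMap.inr Rᵐᵒᵖ P Q) := by rw [h3]; trivial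
      obtain ⟨x, hx, _, ⟨c, hc, rfl⟩, hxy⟩ := Submodule.mem_sup.mp (Submodule.mem_comap.mp hb')
      have hx' : x = (-c, -b) := by
        rw [eq_sub_of_add_eq hxy]; simp
      have : p = (a - c) + (p - (a - c)) := by abel
      rw [this]
      refine Submodule.add_mem_sup ?_ ?_
      · change ((a - c, 0) : P × Q) ∈ L
        have e : ((a - c, 0) : P × Q) = (a, b) + x := by rw [hx']; simp [sub_eq_add_neg]
        rw [e]
        exact L.add_mem hab hx
      · have hc' : f c = 0 := hc
        rw [LinearMap.mem_ker, map_sub, map_sub, ha, hc', sub_zero, sub_self]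
    change L = ⊤
    rw [eq_top_iff]
    rintro ⟨p, q⟩ -
    have hq : q ∈ L.map (LinearMap.snd Rᵐᵒᵖ P Q) := by rw [h2]; trivial
    obtain ⟨⟨a, b⟩, hab, hb⟩ := hq
    change b = q at hb
    subst hb
    have hp : p - a ∈ L.comap (LinearMap.inl Rᵐᵒᵖ P Q) := by rw [h4]; trivial
    have hp' : ((p - a, 0) : P × Q) ∈ L := hp
    have e : ((p, b) : P × Q) = (p - a, 0) + (a, b) := by simp
    rw [e]
    exact L.add_mem hp' hab

lemma pcIT_prod (M N : FGMod R) : pcIT (M.prod N) = pcIT M + pcIT N := by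
  obtain ⟨P, f, hf⟩ := exists_cover M
  obtain ⟨Q, g, hg⟩ := exists_cover N
  rw [← cover_len hf, ← cover_len hg, ← lenIT_prod, cover_len (cover_prod hf hg)]

lemma pcIT_iso_le {M N : FGMod R} (e : M ≃ₗ[Rᵐᵒᵖ] N) : pcIT N ≤ pcIT M := by
  obtain ⟨P, f, hf⟩ := exists_cover M
  rw [← cover_len hf]
  exact pcIT_le (e.toLinearMap ∘ₗ f) hf.1 (e.surjective.comp hf.2.1)

lemma pcIT_iso {M N : FGMod R} (e : M ≃ₗ[Rᵐᵒᵖ] N) : pcIT M = pcIT N :=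
  le_antisymm (pcIT_iso_le e.symm) (pcIT_iso_le e)

lemma lenIT_le_pcIT (M : FGMod R) : lenIT M ≤ pcIT M := by
  obtain ⟨P, f, hf⟩ := exists_cover M
  rw [← cover_len hf]
  exact lenIT_le_of_surj f hf.2.1

lemma pcIT_eq_iff (M : FGMod R) : pcIT M = lenIT M ↔ M.Proj := by
  constructor
  · intro h
    obtain ⟨P, f, hf⟩ := exists_cover M
    rw [← cover_len hf] at h
    have hinj := inj_of_surj_of_lenIT f hf.2.1 h
    have : Module.Projective Rᵐᵒᵖ P := hf.1
    exact Module.Projective.of_equiv (LinearEquiv.ofBijective f ⟨hinj, hf.2.1⟩)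
  · intro h
    exact le_antisymm (pcIT_le LinearMap.id h surjective_id) (lenIT_le_pcIT M)

variable (R) in
/-- The additive invariant `M ↦ length (Ω M)` on `K`. -/
noncomputable def lamIT : ITK R →+ ℤ :=
  QuotientAddGroup.lift (AddSubgroup.closure (ITRel R))
    (FreeAbelianGroup.lift fun M : FGMod R => (pcIT M : ℤ) - lenIT M) (by
      rw [AddSubgroup.closure_le]
      rintro x (⟨A, B, C, ⟨e⟩, rfl⟩ | ⟨P, hP, rfl⟩)
      · have e' : A ≃ₗ[Rᵐᵒᵖ] (B.prod C) := e
        have h1 := pcIT_iso e'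
        have h2 := lenIT_iso e'
        rw [pcIT_prod] at h1
        rw [lenIT_prod] at h2
        simp only [SetLike.mem_coe, AddMonoidHom.mem_ker, map_sub, FreeAbelianGroup.lift_apply_of]
        rw [h1, h2]
        push_cast
        ring
      · simp only [SetLike.mem_coe, AddMonoidHom.mem_ker, FreeAbelianGroup.lift_apply_of]
        rw [(pcIT_eq_iff P).mpr hP, sub_self])

lemma lamIT_cls (M : FGMod R) : lamIT R (ITcls R M) = (pcIT M : ℤ) - lenIT M := by
  change (FreeAbelianGroup.lift fun M : FGMod R => (pcIT M : ℤ) - lenIT M)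
    (FreeAbelianGroup.of M) = _
  rw [FreeAbelianGroup.lift_apply_of]

lemma lamIT_nonneg (M : FGMod R) : 0 ≤ lamIT R (ITcls R M) := by
  rw [lamIT_cls]
  have := lenIT_le_pcIT M
  omega

lemma lamIT_eq_zero (M : FGMod R) : lamIT R (ITcls R M) = 0 ↔ M.Proj := by
  rw [lamIT_cls, ← pcIT_eq_iff]
  omega

lemma cls_proj {P : FGMod R} (h : P.Proj) : ITcls R P = 0 := by
  refine (QuotientAddGroup.eq_zero_iff _).mpr ?_
  exact AddSubgroup.subset_closure (Or.inr ⟨P, h, rfl⟩)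

lemma cls_add {A B C : FGMod R} (e : A ≃ₗ[Rᵐᵒᵖ] (B × C : Type u)) :
    ITcls R A = ITcls R B + ITcls R C := by
  have h : ITcls R A - ITcls R B - ITcls R C = 0 := by
    refine (QuotientAddGroup.eq_zero_iff _).mpr ?_
    exact AddSubgroup.subset_closure (Or.inl ⟨A, B, C, ⟨e⟩, rfl⟩)
  rw [sub_sub, sub_eq_zero] at h
  exact h

lemma cls_iso {A B : FGMod R} (e : A ≃ₗ[Rᵐᵒᵖ] B) : ITcls R A = ITcls R B := by
  let Z : FGMod R := ⟨PUnit.{u + 1}⟩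
  have hZ : Z.Proj := by
    change Module.Projective Rᵐᵒᵖ PUnit.{u + 1}
    infer_instance
  have := cls_add (A := A) (B := B) (C := Z) (e.trans (LinearEquiv.prodUnique (M₂ := PUnit.{u + 1})).symm)
  rw [this, cls_proj hZ, add_zero]

lemma exists_syzygy (M : FGMod R) : ∃ N, IsSyzygy M N := by
  obtain ⟨P, f, hf⟩ := exists_cover M
  exact ⟨⟨LinearMap.ker f⟩, P, f, hf, ⟨LinearEquiv.refl _ _⟩⟩

variable {OmK : AddMonoid.End (ITK R)}

lemma om_mul_apply (f g : AddMonoid.End (ITK R)) (x : ITK R) : (f * g) x = f (g x) := rfl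

lemma om_cls (hOm : IsSyzygyEnd R OmK) (n : ℕ) :
    ∀ M : FGMod R, ∃ N, (OmK ^ n) (ITcls R M) = ITcls R N := by
  induction n with
  | zero => intro M; exact ⟨M, rfl⟩
  | succ n ih =>
    intro M
    obtain ⟨N, hN⟩ := exists_syzygy M
    rw [pow_succ, om_mul_apply, hOm M N hN]
    exact ih N

lemma hasPd_iff (hOm : IsSyzygyEnd R OmK) (n : ℕ) :
    ∀ M : FGMod R, HasPdLE n M ↔ lamIT R ((OmK ^ n) (ITcls R M)) = 0 := by
  induction n with
  | zero => intro M; exact (lamIT_eq_zero M).symm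
  | succ n ih =>
    intro M
    obtain ⟨N, hN⟩ := exists_syzygy M
    constructor
    · rintro (h | ⟨N, hN, h⟩)
      · rw [cls_proj h, map_zero, map_zero]
      · rw [pow_succ, om_mul_apply, hOm M N hN]
        exact (ih N).mp h
    · intro h
      rw [pow_succ, om_mul_apply, hOm M N hN] at h
      exact Or.inr ⟨N, hN, (ih N).mpr h⟩

lemma om_zero_of_lam (hOm : IsSyzygyEnd R OmK) {n m : ℕ} (hnm : n ≤ m) (M : FGMod R)
    (h : lamIT R ((OmK ^ n) (ITcls R M)) = 0) : (OmK ^ m) (ITcls R M) = 0 := by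
  obtain ⟨N, hN⟩ := om_cls hOm n M
  rw [hN, lamIT_eq_zero] at h
  obtain ⟨k, rfl⟩ := Nat.exists_eq_add_of_le' hnm
  rw [pow_add, om_mul_apply, hN, cls_proj h, map_zero]

lemma lam_om_nonneg (hOm : IsSyzygyEnd R OmK) (n : ℕ) (M : FGMod R) :
    0 ≤ lamIT R ((OmK ^ n) (ITcls R M)) := by
  obtain ⟨N, hN⟩ := om_cls hOm n M
  rw [hN]
  exact lamIT_nonneg N

lemma ITgen_indec {N : FGMod R} (hN : N.Indec) (hNP : ¬ N.Proj) :
    ITgen R N = AddSubgroup.zmultiples (ITcls R N) := by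
  rw [ITgen, AddSubgroup.zmultiples_eq_closure]
  congr 1
  ext x
  constructor
  · rintro ⟨N', ⟨A, B, hAB, ⟨e⟩⟩, hI, -, rfl⟩
    have hA : A ≠ ⊥ := by
      rintro rfl
      have := hI.1
      exact not_subsingleton N' e.injective.subsingleton
    have hB : B = ⊥ := (hN.2 A B hAB).resolve_left hA
    have hT : A = ⊤ := by
      have := hAB.sup_eq_top
      rwa [hB, sup_bot_eq] at this
    exact cls_iso (e.trans (LinearEquiv.ofTop A hT))
  · rintro rfl
    exact ⟨N, ⟨⊤, ⊥, isCompl_top_bot, ⟨(LinearEquiv.ofTop ⊤ rfl).symm⟩⟩, hN, hNP, rfl⟩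

lemma rk_zero {x : ITK R} (h : rkIT R (AddSubgroup.zmultiples x) = 0) :
    ∃ k : ℤ, k ≠ 0 ∧ k • x = 0 := by
  unfold rkIT at h
  have : Module.Finite ℤ (AddSubgroup.toIntSubmodule (AddSubgroup.zmultiples x)) := by
    rw [Module.Finite.iff_fg]
    refine ⟨{x}, ?_⟩
    ext y
    rw [Finset.coe_singleton, Submodule.mem_span_singleton]
    exact AddSubgroup.mem_zmultiples_iff.symm
  rw [Module.finrank_eq_zero_iff] at h
  obtain ⟨a, ha, hx⟩ := h ⟨x, AddSubgroup.mem_zmultiples x⟩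
  exact ⟨a, ha, congrArg Subtype.val hx⟩

lemma rk_bot : rkIT R (AddSubgroup.zmultiples (0 : ITK R)) = 0 := by
  unfold rkIT
  have : Subsingleton (AddSubgroup.toIntSubmodule (AddSubgroup.zmultiples (0 : ITK R))) := by
    rw [AddSubgroup.zmultiples_zero_eq_bot]
    exact inferInstanceAs (Subsingleton (⊥ : AddSubgroup (ITK R)))
  exact Module.finrank_zero_of_subsingleton

lemma indec_case (hOm : IsSyzygyEnd R OmK) {N : FGMod R} (hN : N.Indec) (hF : FinPd N) :
    lamIT R ((OmK ^ phiIT R OmK N) (ITcls R N)) = 0 := by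
  by_cases hNP : N.Proj
  · rw [cls_proj hNP, map_zero, map_zero]
  obtain ⟨n, hn⟩ := hF
  rw [hasPd_iff hOm] at hn
  have hr : ∀ i, (ITgen R N).map ((OmK ^ i : AddMonoid.End (ITK R)) : ITK R →+ ITK R)
      = AddSubgroup.zmultiples ((OmK ^ i) (ITcls R N)) := by
    intro i
    rw [ITgen_indec hN hNP]
    exact AddMonoidHom.map_zmultiples _ _
  have h0 : ∀ i, n ≤ i →
      rkIT R ((ITgen R N).map ((OmK ^ i : AddMonoid.End (ITK R)) : ITK R →+ ITK R)) = 0 := by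
    intro i hi
    rw [hr, om_zero_of_lam hOm hi N hn, rk_bot]
  have hmem := Nat.sInf_mem (s := {n | ∀ i, n ≤ i →
    rkIT R ((ITgen R N).map ((OmK ^ i : AddMonoid.End (ITK R)) : ITK R →+ ITK R))
      = rkIT R ((ITgen R N).map ((OmK ^ n : AddMonoid.End (ITK R)) : ITK R →+ ITK R))})
    ⟨n, fun i hi => by rw [h0 i hi, h0 n le_rfl]⟩
  have h1 := hmem (max (phiIT R OmK N) n) (le_max_left _ _)
  rw [h0 _ (le_max_right _ _)] at h1
  have h2 : rkIT R ((ITgen R N).map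
      ((OmK ^ phiIT R OmK N : AddMonoid.End (ITK R)) : ITK R →+ ITK R)) = 0 := h1.symm
  rw [hr] at h2
  obtain ⟨k, hk, hx⟩ := rk_zero h2
  have h3 := congrArg (lamIT R) hx
  rw [map_zsmul, map_zero, smul_eq_mul] at h3
  exact (mul_eq_zero.mp h3).resolve_left hk

lemma main_aux (hOm : IsSyzygyEnd R OmK) (d : ℕ) (hphi : ∀ M : FGMod R, phiIT R OmK M ≤ d)
    (l : ℕ) : ∀ M : FGMod R, lenIT M = l → FinPd M → (OmK ^ d) (ITcls R M) = 0 := by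
  induction l using Nat.strong_induction_on with
  | _ l ih =>
    intro M hl hF
    by_cases hI : M.Indec
    · exact om_zero_of_lam hOm (hphi M) M (indec_case hOm hI hF)
    rcases subsingleton_or_nontrivial M with hs | hnt
    · have : M.Proj := by
        change Module.Projective Rᵐᵒᵖ M
        infer_instance
      rw [cls_proj this, map_zero]
    have hI' : ∃ A B : Submodule Rᵐᵒᵖ M, IsCompl A B ∧ A ≠ ⊥ ∧ B ≠ ⊥ := by
      by_contra hcon
      push Not at hcon
      exact hI ⟨hnt, fun A B h => or_iff_not_imp_left.mpr (hcon A B h)⟩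
    obtain ⟨A, B, hAB, hA, hB⟩ := hI'
    let A' : FGMod R := ⟨A⟩
    let B' : FGMod R := ⟨B⟩
    have e : M ≃ₗ[Rᵐᵒᵖ] (A' × B' : Type u) := (Submodule.prodEquivOfIsCompl A B hAB).symm
    have hc := cls_add e
    have hlen : lenIT M = lenIT A' + lenIT B' := by
      rw [← lenIT_prod]
      exact lenIT_iso e
    have hpos : ∀ C : Submodule Rᵐᵒᵖ M, C ≠ ⊥ → 0 < lenIT (⟨C⟩ : FGMod R) := by
      intro C hC
      have : Nontrivial C := Submodule.nontrivial_iff_ne_bot.mpr hC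
      have h1 : 0 < Module.length Rᵐᵒᵖ C := Module.length_pos
      have h2 := lenIT_cast (⟨C⟩ : FGMod R)
      change _ = Module.length Rᵐᵒᵖ C at h2
      rw [← h2] at h1
      exact_mod_cast h1
    have hA0 : 0 < lenIT A' := hpos A hA
    have hB0 : 0 < lenIT B' := hpos B hB
    obtain ⟨n, hn⟩ := hF
    rw [hasPd_iff hOm, hc, map_add, map_add] at hn
    have ha := lam_om_nonneg hOm n A'
    have hb := lam_om_nonneg hOm n B'
    have hFA : FinPd A' := ⟨n, (hasPd_iff hOm n A').mpr (by omega)⟩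
    have hFB : FinPd B' := ⟨n, (hasPd_iff hOm n B').mpr (by omega)⟩
    rw [hc, map_add, ih _ (by omega) A' rfl hFA, ih _ (by omega) B' rfl hFB, add_zero]

end helpers

/-- If the `φ`-dimension of `R` is finite (bounded by `d`), then the
finitistic dimension of `R` is finite; indeed `fin.dim R ≤ φ-dim R`. -/
theorem findim_le_phidim (R : Type u) [Ring R] [IsArtinianRing Rᵐᵒᵖ]
    (OmK : AddMonoid.End (ITK R)) (hOm : IsSyzygyEnd R OmK)
    (d : ℕ) (hphi : ∀ M : FGMod R, phiIT R OmK M ≤ d) :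
    ∀ M : FGMod R, FinPd M → pdIT M ≤ d := by
  intro M hF
  refine Nat.sInf_le ?_
  change HasPdLE d M
  rw [hasPd_iff hOm, main_aux hOm d hphi _ M rfl hF, map_zero]
end

section
/- Let R be a right artinian ring with φ-dim(R) = 0. Then every finitely generated right R-module has projective dimension either 0 or infinity, and consequently ψ(M) = φ(M) = 0 for all finitely generated M; in particular ψ-dim(R) = 0. -/
open Module Function

universe u

variable (R : Type u) [Ring R]

variable {R}

variable (R)

section Generic

variable {A : Type u} [Ring A]

/-- The endomorphism ring property we need: nontrivial, sums of nonunits are nonunits and right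
factors of units are units. -/
structure LocEnd (S : Type*) [Ring S] : Prop where
  hadd : ∀ a b : S, IsUnit (a + b) → IsUnit a ∨ IsUnit b
  hmul : ∀ a b : S, IsUnit (a * b) → IsUnit b
  hne : ¬ IsUnit (0 : S)

lemma locEnd_of_indec {X : Type u} [AddCommGroup X] [Module A X] [IsArtinian A X]
    [IsNoetherian A X] [Nontrivial X]
    (h : ∀ U V : Submodule A X, IsCompl U V → U = ⊥ ∨ V = ⊥) :
    LocEnd (Module.End A X) := by
  have hinj : ∀ a : Module.End A X, Injective a → IsUnit a := fun a ha =>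
    (Module.End.isUnit_iff a).2 (IsArtinian.bijective_of_injective_endomorphism a ha)
  have hmul : ∀ a b : Module.End A X, IsUnit (a * b) → IsUnit b := by
    intro a b hab
    apply hinj
    have := ((Module.End.isUnit_iff _).1 hab).1
    rw [Module.End.coe_mul] at this
    exact this.of_comp
  have key : ∀ a : Module.End A X, IsUnit a ∨ IsUnit (1 - a) := by
    intro a
    obtain ⟨m, hm, hm1⟩ := ((LinearMap.eventually_isCompl_ker_pow_range_pow a).and
          (Filter.eventually_ge_atTop 1)).exists
    rcases h _ _ hm with h2 | h2
    · left
      have : Injective (a ^ m) := LinearMap.ker_eq_bot.1 h2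
      obtain ⟨k, rfl⟩ := Nat.exists_eq_add_of_le' hm1
      rw [pow_succ, Module.End.coe_mul] at this
      exact hinj _ this.of_comp
    · right
      exact IsNilpotent.isUnit_one_sub ⟨m, LinearMap.range_eq_bot.1 h2⟩
  refine ⟨?_, hmul, not_isUnit_zero⟩
  intro a b hab
  obtain ⟨u, hu⟩ := hab
  rcases key (↑u⁻¹ * a) with h1 | h1
  · exact Or.inl (hmul _ _ h1)
  · right
    apply hmul ↑u⁻¹
    have : (1 : Module.End A X) - ↑u⁻¹ * a = ↑u⁻¹ * b := by
      rw [← Units.inv_mul u, hu, mul_add]; abel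
    rwa [this] at h1

variable {X : Type u} [AddCommGroup X] [Module A X]

/-- The radical of `Hom(M, X)`. -/
def radHom (hX : LocEnd (Module.End A X)) (M : Type u) [AddCommGroup M] [Module A M] :
    Submodule (Module.End A X) (M →ₗ[A] X) where
  carrier := {g | ∀ f : X →ₗ[A] M, ¬ IsUnit (g ∘ₗ f : Module.End A X)}
  add_mem' := by
    intro a b ha hb f hf
    rw [LinearMap.add_comp] at hf
    rcases hX.hadd _ _ hf with h | h
    · exact ha f h
    · exact hb f h
  zero_mem' := by
    intro f hf
    rw [LinearMap.zero_comp] at hf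
    exact hX.hne hf
  smul_mem' := by
    intro s g hg f hf
    exact hg f (hX.hmul s _ hf)

/-- The multiplicity of `X` in `M`. -/
noncomputable def multX (hX : LocEnd (Module.End A X)) (M : Type u) [AddCommGroup M]
    [Module A M] : ℕ∞ :=
  Module.length (Module.End A X) ((M →ₗ[A] X) ⧸ radHom hX M)

variable (hX : LocEnd (Module.End A X))

lemma mem_radHom {M : Type u} [AddCommGroup M] [Module A M] (g : M →ₗ[A] X) :
    g ∈ radHom hX M ↔ ∀ f : X →ₗ[A] M, ¬ IsUnit (g ∘ₗ f : Module.End A X) := Iff.rfl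

lemma multX_prod (M N : Type u) [AddCommGroup M] [Module A M] [AddCommGroup N] [Module A N] :
    multX hX (M × N) = multX hX M + multX hX N := by
  let F : (M × N →ₗ[A] X) →ₗ[Module.End A X]
      ((M →ₗ[A] X) ⧸ radHom hX M) × ((N →ₗ[A] X) ⧸ radHom hX N) :=
    (LinearMap.prodMap (radHom hX M).mkQ (radHom hX N).mkQ) ∘ₗ
      (LinearMap.coprodEquiv (R := A) (Module.End A X)).symm.toLinearMap
  have hF : Surjective F := by
    apply Surjective.comp (g := LinearMap.prodMap (radHom hX M).mkQ (radHom hX N).mkQ)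
    · exact Surjective.prodMap (Submodule.mkQ_surjective _) (Submodule.mkQ_surjective _)
    · exact LinearEquiv.surjective _
  have hk : LinearMap.ker F = radHom hX (M × N) := by
    ext g
    have : g ∈ LinearMap.ker F ↔ g ∘ₗ LinearMap.inl A M N ∈ radHom hX M ∧
        g ∘ₗ LinearMap.inr A M N ∈ radHom hX N := by
      rw [LinearMap.mem_ker, ← Submodule.Quotient.mk_eq_zero (radHom hX M),
        ← Submodule.Quotient.mk_eq_zero (radHom hX N)]
      exact Prod.mk_eq_zero
    rw [this]
    constructor
    · rintro ⟨h1, h2⟩ f hf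
      have : g ∘ₗ f = (g ∘ₗ LinearMap.inl A M N) ∘ₗ (LinearMap.fst A M N ∘ₗ f) +
          (g ∘ₗ LinearMap.inr A M N) ∘ₗ (LinearMap.snd A M N ∘ₗ f) := by
        ext x
        simp [← map_add]
      rw [this] at hf
      rcases hX.hadd _ _ hf with h | h
      · exact h1 _ h
      · exact h2 _ h
    · intro h
      exact ⟨fun f hf => h (LinearMap.inl A M N ∘ₗ f) hf,
        fun f hf => h (LinearMap.inr A M N ∘ₗ f) hf⟩
  unfold multX
  rw [← Module.length_prod, ← hk]
  exact (F.quotKerEquivOfSurjective hF).length_eq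

lemma multX_congr {M N : Type u} [AddCommGroup M] [Module A M] [AddCommGroup N] [Module A N]
    (e : M ≃ₗ[A] N) : multX hX M = multX hX N := by
  let F : (M →ₗ[A] X) →ₗ[Module.End A X] ((N →ₗ[A] X) ⧸ radHom hX N) :=
    (radHom hX N).mkQ ∘ₗ
      { toFun := fun g => g ∘ₗ e.symm.toLinearMap
        map_add' := fun _ _ => rfl
        map_smul' := fun _ _ => rfl }
  have hF : Surjective F := by
    intro y
    obtain ⟨g, rfl⟩ := Submodule.mkQ_surjective _ y
    refine ⟨g ∘ₗ e.toLinearMap, ?_⟩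
    show (radHom hX N).mkQ ((g ∘ₗ e.toLinearMap) ∘ₗ e.symm.toLinearMap) = _
    congr 1
    ext x; simp
  have hk : LinearMap.ker F = radHom hX M := by
    ext g
    have : g ∈ LinearMap.ker F ↔ g ∘ₗ e.symm.toLinearMap ∈ radHom hX N := by
      rw [LinearMap.mem_ker, ← Submodule.Quotient.mk_eq_zero (radHom hX N)]
      rfl
    rw [this]
    constructor
    · intro h f hf
      refine h (e.toLinearMap ∘ₗ f) ?_
      convert hf using 1
      ext x; simp
    · intro h f hf
      exact h (e.symm.toLinearMap ∘ₗ f) hf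
  unfold multX
  rw [← hk]
  exact (F.quotKerEquivOfSurjective hF).length_eq

lemma multX_self : multX hX X = 1 := by
  unfold multX
  rw [Module.length_eq_one_iff, isSimpleModule_iff_isCoatom]
  constructor
  · intro h
    have : (LinearMap.id : X →ₗ[A] X) ∈ radHom hX X := h ▸ Submodule.mem_top
    exact this LinearMap.id (isUnit_one (M := Module.End A X))
  · intro N hN
    obtain ⟨g, hg, hg'⟩ := SetLike.exists_of_lt hN
    rw [mem_radHom] at hg'
    push Not at hg'
    obtain ⟨f, hf⟩ := hg'
    obtain ⟨u, hu⟩ := hf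
    have hf : IsUnit (f : Module.End A X) := hX.hmul g f ⟨u, hu⟩
    obtain ⟨v, hv⟩ := hf
    have hgu : (↑(v * u⁻¹) : Module.End A X) * g = 1 := by
      have : (g : Module.End A X) = ↑(u * v⁻¹) := by
        rw [Units.val_mul, Units.eq_mul_inv_iff_mul_eq, hv]; exact hu.symm
      rw [this, ← Units.val_mul]; simp
    rw [eq_top_iff]
    intro k _
    have := N.smul_mem ((k : Module.End A X) * (↑(v * u⁻¹) : Module.End A X)) hg
    convert this using 1
    show k = ((k : Module.End A X) * (↑(v * u⁻¹) : Module.End A X)) * (g : Module.End A X)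
    rw [mul_assoc, hgu, mul_one]

lemma split_of_notMem {M : Type u} [AddCommGroup M] [Module A M] (g : M →ₗ[A] X)
    (hg : g ∉ radHom hX M) : ∃ f : X →ₗ[A] M, g ∘ₗ f = LinearMap.id := by
  rw [mem_radHom] at hg
  push Not at hg
  obtain ⟨f, u, hu⟩ := hg
  refine ⟨f ∘ₗ (↑u⁻¹ : Module.End A X), ?_⟩
  rw [← LinearMap.comp_assoc, ← hu]
  exact u.mul_inv

lemma multX_proj {P : Type u} [AddCommGroup P] [Module A P] [Module.Projective A P]
    (hnp : ¬ Module.Projective A X) : multX hX P = 0 := by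
  unfold multX
  rw [Module.length_eq_zero_iff, Submodule.Quotient.subsingleton_iff, eq_top_iff]
  intro g _
  by_contra hg
  obtain ⟨f, hf⟩ := split_of_notMem hX g hg
  exact hnp (Module.Projective.of_split f g hf)

lemma multX_ne_top (n : ℕ) : ∀ (M : Type u) [AddCommGroup M] [Module A M] [IsArtinian A M]
    [IsNoetherian A M], Module.length A M ≤ n → multX hX M ≠ ⊤ := by
  have hX1 : Nontrivial X := by
    by_contra h
    rw [not_nontrivial_iff_subsingleton] at h
    exact hX.hne (isUnit_of_subsingleton _)
  induction n with
  | zero =>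
    intro M _ _ _ _ h
    have h0 : Module.length A M = 0 := by simpa using h
    rw [Module.length_eq_zero_iff] at h0
    have : multX hX M = 0 := Module.length_eq_zero_iff.2 inferInstance
    simp [this]
  | succ n ih =>
    intro M _ _ _ _ h
    by_cases hr : radHom hX M = ⊤
    · have : multX hX M = 0 := by
        unfold multX
        rw [Module.length_eq_zero_iff, Submodule.Quotient.subsingleton_iff, hr]
      simp [this]
    · obtain ⟨g, hg⟩ : ∃ g, g ∉ radHom hX M := by
        by_contra hcon
        push Not at hcon
        exact hr (eq_top_iff.2 fun g _ => hcon g)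
      obtain ⟨f, hf⟩ := split_of_notMem hX g hg
      have hfg : ∀ x, g (f x) = x := fun x => LinearMap.congr_fun hf x
      let e : M ≃ₗ[A] X × LinearMap.ker g :=
        LinearEquiv.ofLinearMap
          (LinearMap.prod g (LinearMap.codRestrict (LinearMap.ker g)
            (LinearMap.id - f ∘ₗ g) (fun x => by simp [hfg])))
          (LinearMap.coprod f (LinearMap.ker g).subtype)
          (by
            ext x
            · simp [hfg]
            · simp [hfg]
            · simp
            · simp)
          (by ext x; simp)
      rw [multX_congr hX e, multX_prod, multX_self]
      have hlen : Module.length A (LinearMap.ker g) < Module.length A M := by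
        apply Submodule.length_lt
        intro ht
        obtain ⟨x, hx⟩ := exists_ne (0 : X)
        apply hx
        rw [← hfg x]
        have : f x ∈ LinearMap.ker g := ht ▸ Submodule.mem_top
        exact this
      have := ih (LinearMap.ker g) (by
        have h2 := hlen.trans_le h
        push_cast at h2
        exact Order.le_of_lt_add_one h2)
      simpa using this

lemma ker_proj_of_retract {L P Q : Type u} [AddCommGroup L] [Module A L]
    [AddCommGroup P] [Module A P] [AddCommGroup Q] [Module A Q]
    [Module.Projective A P] [Module.Projective A Q] (f : P →ₗ[A] L) (hf : Surjective f)
    (hK : Module.Projective A (LinearMap.ker f)) (i : X →ₗ[A] L) (p : L →ₗ[A] X)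
    (hpi : p ∘ₗ i = LinearMap.id) (q : Q →ₗ[A] X) (hq : Surjective q) :
    Module.Projective A (LinearMap.ker q) := by
  open CategoryTheory in
  have aux : ∀ {Y T : Type u} [AddCommGroup Y] [Module A Y] [AddCommGroup T] [Module A T]
      [Module.Projective A T] (t : T →ₗ[A] Y) (_ : Surjective t),
      HasProjectiveDimensionLT (ModuleCat.of A Y) 2 ↔
        Module.Projective A (LinearMap.ker t) := by
    intro Y T _ _ _ _ hT t ht
    let S := ModuleCat.shortComplexOfCompEqZero (LinearMap.ker t).subtype t (by ext x; simp)
    have hS : S.ShortExact := ModuleCat.shortComplex_shortExact S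
      (LinearMap.exact_subtype_ker_map t) (Submodule.subtype_injective _) ht
    have h2 : Projective S.X₂ := (IsProjective.iff_projective (R := A) T).1 hT
    rw [IsProjective.iff_projective (R := A), projective_iff_hasProjectiveDimensionLT_one]
    exact hS.hasProjectiveDimensionLT_X₃_iff 0 h2
  rw [← aux q hq]
  have hL := (aux f hf).2 hK
  have hret : CategoryTheory.Retract (ModuleCat.of A X) (ModuleCat.of A L) :=
    { i := ModuleCat.ofHom i
      r := ModuleCat.ofHom p
      retract := by rw [← ModuleCat.ofHom_comp, hpi]; rfl }
  exact hret.hasProjectiveDimensionLT 2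

end Generic

section Main

variable {R}

lemma exists_projCover [IsArtinianRing Rᵐᵒᵖ] (M : FGMod R) :
    ∃ (P : FGMod R) (f : P →ₗ[Rᵐᵒᵖ] M), IsProjCover M P f := by
  let T : Set ℕ∞ := {d | ∃ (P : FGMod R) (f : P →ₗ[Rᵐᵒᵖ] M), P.Proj ∧ Surjective f ∧
    d = Module.length Rᵐᵒᵖ P}
  have hT : T.Nonempty := by
    obtain ⟨n, f, hf⟩ := Module.Finite.exists_fin' Rᵐᵒᵖ M
    exact ⟨_, ⟨Fin n → Rᵐᵒᵖ⟩, f, (inferInstance : Module.Projective Rᵐᵒᵖ (Fin n → Rᵐᵒᵖ)), hf, rfl⟩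
  obtain ⟨d, ⟨P, f, hP, hf, rfl⟩, hmin⟩ := WellFounded.has_min
    (wellFounded_lt (α := ℕ∞)) T hT
  refine ⟨P, f, hP, hf, ?_⟩
  intro N hN
  by_contra hNtop
  have hP' : Module.Projective Rᵐᵒᵖ P := hP
  have hNs : Surjective (f ∘ₗ N.subtype) := by
    intro m
    obtain ⟨p, rfl⟩ := hf m
    have : p ∈ N ⊔ LinearMap.ker f := hN ▸ Submodule.mem_top
    obtain ⟨a, ha, b, hb, rfl⟩ := Submodule.mem_sup.1 this
    refine ⟨⟨a, ha⟩, ?_⟩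
    rw [LinearMap.mem_ker] at hb
    simp [hb]
  obtain ⟨g, hg⟩ := Module.projective_lifting_property (f ∘ₗ N.subtype) f hNs
  let h : Module.End Rᵐᵒᵖ P := N.subtype ∘ₗ g
  have hfh : ∀ x, f (h x) = f x := fun x => LinearMap.congr_fun hg x
  have hfhn : ∀ n x, f ((h ^ n) x) = f x := by
    intro n
    induction n with
    | zero => intro x; simp
    | succ n ih => intro x; rw [pow_succ, Module.End.mul_apply, ih, hfh]
  obtain ⟨m, hm, hm1⟩ := ((LinearMap.eventually_isCompl_ker_pow_range_pow h).and
          (Filter.eventually_ge_atTop 1)).exists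
  have hne : LinearMap.range (h ^ m) ≠ ⊤ := by
    intro ht
    apply hNtop
    rw [eq_top_iff, ← ht]
    rintro _ ⟨x, rfl⟩
    obtain ⟨k, rfl⟩ := Nat.exists_eq_add_of_le' hm1
    rw [pow_succ', Module.End.mul_apply]
    exact (g _).2
  have hlt : Module.length Rᵐᵒᵖ (LinearMap.range (h ^ m)) < Module.length Rᵐᵒᵖ P :=
    Submodule.length_lt hne
  refine hmin _ ⟨⟨LinearMap.range (h ^ m)⟩, f ∘ₗ (LinearMap.range (h ^ m)).subtype, ?_, ?_, rfl⟩ hlt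
  · exact Module.Projective.of_split (LinearMap.range (h ^ m)).subtype
      (Submodule.projectionOnto _ _ hm.symm) (by ext x; simp)
  · intro y
    obtain ⟨x, rfl⟩ := hf y
    exact ⟨⟨(h ^ m) x, ⟨x, rfl⟩⟩, hfhn m x⟩

lemma proj_congr {M N : FGMod R} (e : M ≃ₗ[Rᵐᵒᵖ] N) (h : M.Proj) : N.Proj := by
  have : Module.Projective Rᵐᵒᵖ M := h
  exact Module.Projective.of_equiv e

/-- The multiplicity homomorphism `K → ℤ`. -/
lemma exists_multHom [IsArtinianRing Rᵐᵒᵖ] (X : FGMod R) (hX : X.Indec) (hnp : ¬ X.Proj) :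
    ∃ μ : ITK R →+ ℤ, μ (ITcls R X) = 1 := by
  have := hX.1
  have hloc : LocEnd (Module.End Rᵐᵒᵖ X) := locEnd_of_indec hX.2
  have hfin : ∀ M : FGMod R, multX hloc M ≠ ⊤ := fun M => by
    have h := Module.length_ne_top (R := Rᵐᵒᵖ) (M := M)
    obtain ⟨n, hn⟩ := ENat.ne_top_iff_exists.1 h
    exact multX_ne_top hloc n M hn.symm.le
  let φ : FreeAbelianGroup (FGMod R) →+ ℤ :=
    FreeAbelianGroup.lift fun M => ((multX hloc M).toNat : ℤ)
  have hφ : AddSubgroup.closure (ITRel R) ≤ φ.ker := by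
    rw [AddSubgroup.closure_le]
    rintro x (⟨U, B, C, ⟨e⟩, rfl⟩ | ⟨P, hP, rfl⟩)
    · have := multX_congr hloc e
      rw [multX_prod] at this
      simp only [φ, SetLike.mem_coe, AddMonoidHom.mem_ker, map_sub, FreeAbelianGroup.lift_apply_of]
      rw [this, ENat.toNat_add (hfin B) (hfin C)]
      push_cast
      ring
    · have hP' : Module.Projective Rᵐᵒᵖ P := hP
      simp only [φ, SetLike.mem_coe, AddMonoidHom.mem_ker, FreeAbelianGroup.lift_apply_of]
      rw [multX_proj hloc hnp]
      simp
  refine ⟨QuotientAddGroup.lift _ φ hφ, ?_⟩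
  show φ (FreeAbelianGroup.of X) = 1
  simp [φ, multX_self]

lemma ITcls_proj (P : FGMod R) (hP : P.Proj) : ITcls R P = 0 :=
  (QuotientAddGroup.eq_zero_iff _).2 (AddSubgroup.subset_closure (Or.inr ⟨P, hP, rfl⟩))

lemma ITcls_iso {M N : FGMod R} (e : M ≃ₗ[Rᵐᵒᵖ] N) : ITcls R M = ITcls R N := by
  let Z : FGMod R := ⟨PUnit⟩
  have hZ : ITcls R Z = 0 := ITcls_proj Z (inferInstanceAs (Module.Projective Rᵐᵒᵖ PUnit.{u+1}))
  have h : ITcls R M - ITcls R N - ITcls R Z = 0 :=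
    (QuotientAddGroup.eq_zero_iff _).2 (AddSubgroup.subset_closure
      (Or.inl ⟨M, N, Z, ⟨e.trans (LinearEquiv.prodUnique (R := Rᵐᵒᵖ) (M := N) (M₂ := PUnit.{u+1})).symm⟩, rfl⟩))
  rw [hZ, sub_zero, sub_eq_zero] at h
  exact h

/-- An indecomposable module with projective syzygy is projective, if `φ = 0`. -/
lemma proj_of_indec [IsArtinianRing Rᵐᵒᵖ]
    (OmK : AddMonoid.End (ITK R)) (hOm : IsSyzygyEnd R OmK)
    (X N : FGMod R) (hphi : phiIT R OmK X = 0) (hX : X.Indec) (hN : IsSyzygy X N)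
    (hNp : N.Proj) : X.Proj := by
  by_contra hnp
  have h0 : OmK (ITcls R X) = 0 := (hOm X N hN).trans (ITcls_proj N hNp)
  have hgen : ITgen R X = AddSubgroup.zmultiples (ITcls R X) := by
    unfold ITgen
    rw [AddSubgroup.zmultiples_eq_closure]
    congr 1
    ext x
    constructor
    · rintro ⟨Y, ⟨U, V, hUV, ⟨e⟩⟩, hY, -, rfl⟩
      rcases hX.2 U V hUV with h | h
      · exfalso
        have := hY.1
        have hs : Subsingleton U := by rw [h]; infer_instance
        obtain ⟨y, hy⟩ := exists_ne (0 : Y)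
        exact hy (e.injective (Subsingleton.elim _ _))
      · have hU : U = ⊤ := by simpa [h] using hUV.sup_eq_top
        exact ITcls_iso (e.trans (LinearEquiv.ofTop U hU))
    · rintro rfl
      exact ⟨X, ⟨⊤, ⊥, isCompl_top_bot, ⟨Submodule.topEquiv.symm⟩⟩, hX, hnp, rfl⟩
  have hmap : ∀ i, 1 ≤ i →
      (ITgen R X).map ((OmK ^ i : AddMonoid.End (ITK R)) : ITK R →+ ITK R) = ⊥ := by
    intro i hi
    rw [hgen, eq_bot_iff]
    obtain ⟨k, rfl⟩ := Nat.exists_eq_add_of_le' hi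
    have h3 : (OmK ^ (k+1)) (ITcls R X) = 0 := by
      rw [pow_succ]
      show (OmK ^ k) (OmK (ITcls R X)) = 0
      rw [h0, map_zero]
    rintro _ ⟨x, hx, rfl⟩
    obtain ⟨z, rfl⟩ := AddSubgroup.mem_zmultiples_iff.1 hx
    have h4 : (OmK ^ (k+1)) (z • ITcls R X) = 0 := by
      rw [map_zsmul, h3, smul_zero]
    exact h4
  have hrk : rkIT R ((ITgen R X).map ((OmK ^ 1 : AddMonoid.End (ITK R)) : ITK R →+ ITK R))
      = rkIT R ((ITgen R X).map ((OmK ^ 0 : AddMonoid.End (ITK R)) : ITK R →+ ITK R)) := by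
    have hmem := Nat.sInf_mem (s := {n | ∀ i, n ≤ i →
      rkIT R ((ITgen R X).map ((OmK ^ i : AddMonoid.End (ITK R)) : ITK R →+ ITK R))
      = rkIT R ((ITgen R X).map ((OmK ^ n : AddMonoid.End (ITK R)) : ITK R →+ ITK R))})
      ⟨1, fun i hi => by rw [hmap i hi, hmap 1 le_rfl]⟩
    change phiIT R OmK X ∈ _ at hmem
    rw [hphi] at hmem
    exact hmem 1 (Nat.zero_le _)
  rw [hmap 1 le_rfl] at hrk
  have hid : (ITgen R X).map ((OmK ^ 0 : AddMonoid.End (ITK R)) : ITK R →+ ITK R)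
      = ITgen R X := by
    rw [pow_zero]
    exact AddSubgroup.map_id _
  rw [hid, hgen] at hrk
  obtain ⟨μ, hμ⟩ := exists_multHom X hX hnp
  have hinj : Injective (LinearMap.toSpanSingleton ℤ (ITK R) (ITcls R X)) := by
    intro a b hab
    have := congrArg μ hab
    simpa [hμ] using this
  have hr : AddSubgroup.toIntSubmodule (AddSubgroup.zmultiples (ITcls R X)) =
      LinearMap.range (LinearMap.toSpanSingleton ℤ (ITK R) (ITcls R X)) := by
    ext x
    rfl
  have h1 : rkIT R (AddSubgroup.zmultiples (ITcls R X)) = 1 := by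
    unfold rkIT
    rw [hr, LinearMap.finrank_range_of_inj hinj, Module.finrank_self]
  have h2 : rkIT R (⊥ : AddSubgroup (ITK R)) = 0 := by
    unfold rkIT
    have : Subsingleton (AddSubgroup.toIntSubmodule (⊥ : AddSubgroup (ITK R))) := by
      rw [map_bot]; infer_instance
    exact Module.finrank_zero_of_subsingleton
  omega

/-- A module with projective syzygy is projective, if `φ = 0`. -/
lemma proj_of_syzygy_proj [IsArtinianRing Rᵐᵒᵖ]
    (OmK : AddMonoid.End (ITK R)) (hOm : IsSyzygyEnd R OmK)
    (hphi : ∀ M : FGMod R, phiIT R OmK M = 0)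
    (M N : FGMod R) (hN : IsSyzygy M N) (hNp : N.Proj) : M.Proj := by
  by_contra hnp
  let T : Set ℕ∞ := {d | ∃ L K : FGMod R, IsSyzygy L K ∧ K.Proj ∧ ¬ L.Proj ∧
    d = Module.length Rᵐᵒᵖ L}
  obtain ⟨d, ⟨L, K, hLK, hK, hL, rfl⟩, hmin⟩ := WellFounded.has_min
    (wellFounded_lt (α := ℕ∞)) T ⟨_, M, N, hN, hNp, hnp, rfl⟩
  have hsum : ∀ U V : Submodule Rᵐᵒᵖ L, IsCompl U V → U ≠ ⊤ → Module.Projective Rᵐᵒᵖ U := by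
    intro U V hUV hU
    by_contra hUp
    obtain ⟨Q, q, hQ, hq, hqs⟩ := exists_projCover (R := R) ⟨U⟩
    obtain ⟨P, f, ⟨hP, hf, -⟩, ⟨e⟩⟩ := hLK
    have hP' : Module.Projective Rᵐᵒᵖ P := hP
    have hQ' : Module.Projective Rᵐᵒᵖ Q := hQ
    have hK' : Module.Projective Rᵐᵒᵖ K := hK
    have hkp := ker_proj_of_retract f hf (Module.Projective.of_equiv e) U.subtype
      (Submodule.projectionOnto _ _ hUV) (by ext x; simp) q hq
    exact hmin _ ⟨⟨U⟩, ⟨LinearMap.ker q⟩, ⟨Q, q, ⟨hQ, hq, hqs⟩, ⟨LinearEquiv.refl _ _⟩⟩,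
      hkp, hUp, rfl⟩ (Submodule.length_lt hU)
  refine hL (proj_of_indec OmK hOm L K (hphi L) ⟨?_, ?_⟩ hLK hK)
  · by_contra h
    rw [not_nontrivial_iff_subsingleton] at h
    exact hL (inferInstanceAs (Module.Projective Rᵐᵒᵖ L))
  · intro U V hUV
    by_contra hcon
    push Not at hcon
    have hU : U ≠ ⊤ := by
      rintro rfl
      exact hcon.2 (by simpa using hUV.inf_eq_bot)
    have hV : V ≠ ⊤ := by
      rintro rfl
      exact hcon.1 (by simpa using hUV.inf_eq_bot)
    have h1 := hsum U V hUV hU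
    have h2 := hsum V U hUV.symm hV
    exact hL (Module.Projective.of_equiv (Submodule.prodEquivOfIsCompl U V hUV))

end Main

/-- If `φ-dim(R) = 0`, then every f.g. right `R`-module has projective
dimension `0` or `∞`, and `ψ(M) = φ(M) = 0` for all f.g. `M`; in particular
`ψ-dim(R) = 0`. -/
theorem psidim_eq_zero_of_phidim_eq_zero (R : Type u) [Ring R] [IsArtinianRing Rᵐᵒᵖ]
    (OmK : AddMonoid.End (ITK R)) (hOm : IsSyzygyEnd R OmK)
    (hphi : ∀ M : FGMod R, phiIT R OmK M = 0) :
    (∀ M : FGMod R, FinPd M → M.Proj) ∧ (∀ M : FGMod R, psiIT R OmK M = 0) := by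
  have h1 : ∀ M : FGMod R, FinPd M → M.Proj := by
    rintro M ⟨n, hn⟩
    induction n generalizing M with
    | zero => exact hn
    | succ n ih =>
      rcases hn with h | ⟨N, hN, hn⟩
      · exact h
      · exact proj_of_syzygy_proj OmK hOm hphi M N hN (ih N hn)
  refine ⟨h1, fun M => ?_⟩
  unfold psiIT
  rw [hphi M, zero_add, ← Nat.le_zero]
  apply csSup_le'
  rintro d ⟨N, X, -, -, hX, rfl⟩
  exact Nat.sInf_le (h1 X hX)
end

section
/- Let R be a right artinian ring, P an indecomposable projective right R-module whose socle contains a submodule isomorphic to S ⊕ S for a simple module S. Then M₁ = P/S and M₂ = P/(S ⊕ S) are non-isomorphic indecomposable modules and φ(M₁ ⊕ M₂) ≥ 1. -/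
open Module Function

universe u

variable (R : Type u) [Ring R]

variable {R}

variable (R)

namespace ITaux

section general

variable {A : Type*} [Ring A] {M : Type*} [AddCommGroup M] [Module A M]
  {X : Type*} [AddCommGroup X] [Module A X]

/-- Indecomposability for unbundled modules. -/
def Ind (A : Type*) [Ring A] (M : Type*) [AddCommGroup M] [Module A M] : Prop :=
  Nontrivial M ∧ ∀ B C : Submodule A M, IsCompl B C → B = ⊥ ∨ C = ⊥

theorem isUnit_or_isNilpotent [IsArtinian A M] [IsNoetherian A M] (h : Ind A M)
    (f : Module.End A M) : IsUnit f ∨ IsNilpotent f := by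
  obtain ⟨n, hn⟩ := Filter.eventually_atTop.mp f.eventually_isCompl_ker_pow_range_pow
  have h1 := hn (n + 1) (by omega)
  rcases h.2 _ _ h1 with h2 | h2
  · left
    rw [LinearMap.ker_eq_bot] at h2
    rw [Module.End.isUnit_iff]
    apply IsArtinian.bijective_of_injective_endomorphism
    rw [pow_succ] at h2
    exact Function.Injective.of_comp (f := (f ^ n : Module.End A M)) (g := f) h2
  · right
    exact ⟨n + 1, LinearMap.range_eq_bot.mp h2⟩

theorem isLocalRing_end [IsArtinian A M] [IsNoetherian A M] (h : Ind A M) :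
    IsLocalRing (Module.End A M) := by
  have := h.1
  apply IsLocalRing.of_isUnit_or_isUnit_one_sub_self
  intro a
  rcases isUnit_or_isNilpotent h a with h1 | h1
  · exact Or.inl h1
  · exact Or.inr h1.isUnit_one_sub

theorem hollow [IsLocalRing (Module.End A M)] [Module.Projective A M]
    (B C : Submodule A M) (h : B ⊔ C = ⊤) : B = ⊤ ∨ C = ⊤ := by
  have hs : Surjective (C.mkQ.comp B.subtype) := by
    intro y
    obtain ⟨x, rfl⟩ := C.mkQ_surjective y
    have hx : x ∈ B ⊔ C := h ▸ Submodule.mem_top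
    obtain ⟨b, hb, c, hc, rfl⟩ := Submodule.mem_sup.mp hx
    refine ⟨⟨b, hb⟩, ?_⟩
    simp only [LinearMap.comp_apply, Submodule.subtype_apply, map_add]
    rw [show C.mkQ c = 0 by simpa using hc, add_zero]
  obtain ⟨l, hl⟩ := Module.projective_lifting_property (C.mkQ.comp B.subtype) C.mkQ hs
  let e : Module.End A M := B.subtype.comp l
  rcases IsLocalRing.isUnit_or_isUnit_of_add_one (a := e) (b := 1 - e) (by simp) with h1 | h1
  · left
    rw [Module.End.isUnit_iff] at h1
    rw [eq_top_iff]
    intro x _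
    obtain ⟨y, rfl⟩ := h1.2 x
    exact (l y).2
  · right
    rw [Module.End.isUnit_iff] at h1
    rw [eq_top_iff]
    intro x _
    obtain ⟨y, rfl⟩ := h1.2 x
    have := LinearMap.congr_fun hl y
    rw [← Submodule.ker_mkQ C, LinearMap.mem_ker]
    have h3 : C.mkQ (e y) = C.mkQ y := this
    rw [LinearMap.sub_apply, map_sub, h3]
    simp

theorem ind_quotient (hM : ∀ B C : Submodule A M, B ⊔ C = ⊤ → B = ⊤ ∨ C = ⊤)
    (T : Submodule A M) (hT : T ≠ ⊤) : Ind A (M ⧸ T) := by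
  refine ⟨Submodule.Quotient.nontrivial_iff.mpr hT, fun B C hBC => ?_⟩
  have key : ∀ B : Submodule A (M ⧸ T), B.comap T.mkQ = ⊤ → B = ⊤ := by
    intro B hB
    rw [eq_top_iff]
    intro x _
    obtain ⟨y, rfl⟩ := T.mkQ_surjective x
    have : y ∈ B.comap T.mkQ := hB ▸ Submodule.mem_top
    exact this
  have hsup : B.comap T.mkQ ⊔ C.comap T.mkQ = ⊤ := by
    rw [eq_top_iff]
    intro x _
    have hx : T.mkQ x ∈ B ⊔ C := hBC.sup_eq_top ▸ Submodule.mem_top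
    obtain ⟨b, hb, c, hc, hbc⟩ := Submodule.mem_sup.mp hx
    obtain ⟨b, rfl⟩ := T.mkQ_surjective b
    have : x = b + (x - b) := by abel
    rw [this]
    refine Submodule.add_mem_sup hb ?_
    simp only [Submodule.mem_comap, map_sub]
    rw [← hbc, add_sub_cancel_left]
    exact hc
  rcases hM _ _ hsup with h | h
  · right
    have := key _ h
    subst this
    simpa using hBC.inf_eq_bot
  · left
    have := key _ h
    subst this
    simpa using hBC.inf_eq_bot

theorem Ind.of_equiv (e : M ≃ₗ[A] X) (h : Ind A X) : Ind A M := by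
  refine ⟨haveI := h.1; e.toEquiv.nontrivial, fun B C hBC => ?_⟩
  have h1 : IsCompl (B.map (e : M →ₗ[A] X)) (C.map (e : M →ₗ[A] X)) := by
    have := (Submodule.orderIsoMapComap e).isCompl hBC
    exact this
  rcases h.2 _ _ h1 with h2 | h2
  · left; simpa [Submodule.map_eq_bot_iff] using h2
  · right; simpa [Submodule.map_eq_bot_iff] using h2

theorem isCompl_retract (f : M →ₗ[A] X) (g : X →ₗ[A] M) (h : Bijective (f.comp g)) :
    IsCompl (LinearMap.range g) (LinearMap.ker f) := by
  constructor
  · rw [Submodule.disjoint_def]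
    rintro _ ⟨x, rfl⟩ hx
    have : x = 0 := h.1 (by simpa using hx)
    simp [this]
  · rw [codisjoint_iff, eq_top_iff]
    intro m _
    obtain ⟨x, hx⟩ := h.2 (f m)
    have : m = g x + (m - g x) := by abel
    rw [this]
    refine Submodule.add_mem_sup ⟨x, rfl⟩ ?_
    rw [LinearMap.mem_ker, map_sub, ← hx]
    simp

theorem iso_of_retract [Nontrivial X] (hM : Ind A M) (f : M →ₗ[A] X) (g : X →ₗ[A] M)
    (h : Bijective (f.comp g)) : Nonempty (X ≃ₗ[A] M) := by
  have hc := isCompl_retract f g h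
  have hg : Injective g := Function.Injective.of_comp (f := f) h.1
  refine ⟨LinearEquiv.ofBijective g ⟨hg, ?_⟩⟩
  rcases hM.2 _ _ hc with h1 | h1
  · exfalso
    obtain ⟨x, hx⟩ := exists_ne (0 : X)
    apply hx
    apply hg
    rw [LinearMap.range_eq_bot.mp h1]; rfl
  · rw [← LinearMap.range_eq_top]
    rw [h1] at hc
    simpa using hc.sup_eq_top

/-- Non-(split) part of `Hom(M, X)`. -/
def rad (A M X : Type*) [Ring A] [AddCommGroup M] [Module A M] [AddCommGroup X] [Module A X]
    [IsArtinian A X] [IsLocalRing (Module.End A X)] :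
    Submodule (Module.End A X) (M →ₗ[A] X) where
  carrier := {f | ∀ g : X →ₗ[A] M, ¬ IsUnit (f.comp g : Module.End A X)}
  zero_mem' := by
    intro g
    rw [LinearMap.zero_comp]
    exact not_isUnit_zero
  add_mem' := by
    intro a b ha hb g
    rw [LinearMap.add_comp]
    exact IsLocalRing.nonunits_add (ha g) (hb g)
  smul_mem' := by
    intro c f hf g hu
    apply hf g
    rw [Module.End.isUnit_iff] at hu ⊢
    apply IsArtinian.bijective_of_injective_endomorphism
    exact Function.Injective.of_comp (f := c) (g := f.comp g) hu.1

theorem mem_rad [IsArtinian A X] [IsLocalRing (Module.End A X)] (f : M →ₗ[A] X) :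
    f ∈ rad A M X ↔ ∀ g : X →ₗ[A] M, ¬ IsUnit (f.comp g : Module.End A X) := Iff.rfl

/-- Multiplicity of `X` in `M`. -/
noncomputable def mult (A M X : Type*) [Ring A] [AddCommGroup M] [Module A M] [AddCommGroup X]
    [Module A X] [IsArtinian A X] [IsLocalRing (Module.End A X)] : ℕ∞ :=
  Module.length (Module.End A X) ((M →ₗ[A] X) ⧸ rad A M X)

/-- Precomposition. -/
def pre (X : Type*) [AddCommGroup X] [Module A X] {N : Type*} [AddCommGroup N] [Module A N]
    (k : N →ₗ[A] M) : (M →ₗ[A] X) →ₗ[Module.End A X] (N →ₗ[A] X) where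
  toFun f := f.comp k
  map_add' f g := LinearMap.add_comp _ _ _
  map_smul' c f := rfl

variable [IsArtinian A X] [IsLocalRing (Module.End A X)]

theorem mult_add {B C : Type*} [AddCommGroup B] [Module A B] [AddCommGroup C] [Module A C]
    (e : M ≃ₗ[A] B × C) : mult A M X = mult A B X + mult A C X := by
  let i : B →ₗ[A] M := e.symm.toLinearMap.comp (LinearMap.inl A B C)
  let j : C →ₗ[A] M := e.symm.toLinearMap.comp (LinearMap.inr A B C)
  let p : M →ₗ[A] B := (LinearMap.fst A B C).comp e.toLinearMap
  let q : M →ₗ[A] C := (LinearMap.snd A B C).comp e.toLinearMap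
  have hij : ∀ m, i (p m) + j (q m) = m := by
    intro m
    apply e.injective
    simp [i, j, p, q]
  let Φ := LinearMap.prod ((rad A B X).mkQ.comp (pre X i)) ((rad A C X).mkQ.comp (pre X j))
  have hsurj : Surjective Φ := by
    rintro ⟨y, z⟩
    obtain ⟨f, rfl⟩ := (rad A B X).mkQ_surjective y
    obtain ⟨g, rfl⟩ := (rad A C X).mkQ_surjective z
    refine ⟨f.comp p + g.comp q, ?_⟩
    have h1 : pre X i (f.comp p + g.comp q) = f := by
      ext x; simp [pre, i, p, q]
    have h2 : pre X j (f.comp p + g.comp q) = g := by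
      ext x; simp [pre, j, p, q]
    change ((rad A B X).mkQ (pre X i (f.comp p + g.comp q)),
      (rad A C X).mkQ (pre X j (f.comp p + g.comp q))) = _
    rw [h1, h2]
  have hker : LinearMap.ker Φ = rad A M X := by
    ext f
    have : f ∈ LinearMap.ker Φ ↔ pre X i f ∈ rad A B X ∧ pre X j f ∈ rad A C X := by
      simp [Φ, LinearMap.mem_ker, Submodule.Quotient.mk_eq_zero]
    rw [this]
    constructor
    · rintro ⟨h1, h2⟩ g hu
      have : f.comp g = (pre X i f).comp (p.comp g) + (pre X j f).comp (q.comp g) := by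
        ext x
        simp only [pre, LinearMap.comp_apply, LinearMap.add_apply, LinearMap.coe_mk,
          AddHom.coe_mk]
        rw [← map_add, hij]
      rw [this] at hu
      rcases IsLocalRing.isUnit_or_isUnit_of_isUnit_add hu with h | h
      · exact h1 _ h
      · exact h2 _ h
    · intro h
      exact ⟨fun g => h (i.comp g), fun g => h (j.comp g)⟩
  unfold mult
  rw [← hker, (LinearMap.quotKerEquivOfSurjective Φ hsurj).length_eq, Module.length_prod]

theorem mult_self : mult A X X = 1 := by
  unfold mult
  rw [Module.length_eq_one_iff, isSimpleModule_iff_isCoatom]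
  constructor
  · intro h
    have : (LinearMap.id : X →ₗ[A] X) ∈ rad A X X := h ▸ Submodule.mem_top
    exact this LinearMap.id isUnit_one
  · intro N hN
    obtain ⟨f, hfN, hf⟩ := SetLike.exists_of_lt hN
    rw [mem_rad] at hf
    push Not at hf
    obtain ⟨g, hg⟩ := hf
    obtain ⟨u, hu⟩ := hg
    rw [eq_top_iff]
    -- f * g * u⁻¹ = 1, hence f is a unit
    have hf : IsUnit (f : Module.End A X) := by
      have hb := (Module.End.isUnit_iff _).mp (hu ▸ u.isUnit : IsUnit (f.comp g : Module.End A X))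
      have hgi : Injective g := Function.Injective.of_comp (f := f) (g := g) hb.1
      have hgb : Bijective g := IsArtinian.bijective_of_injective_endomorphism _ hgi
      rw [Module.End.isUnit_iff]
      exact (Function.Bijective.of_comp_iff f hgb).mp hb
    intro k _
    obtain ⟨v, hv⟩ := hf
    have h4 : k = ((k : Module.End A X) * (v⁻¹ : (Module.End A X)ˣ) : Module.End A X) • f := by
      change k = (k * (v⁻¹ : (Module.End A X)ˣ) : Module.End A X) * f
      rw [← hv]
      simp
    rw [h4]
    exact N.smul_mem _ hfN

theorem mult_eq_zero (h : ∀ (f : M →ₗ[A] X) (g : X →ₗ[A] M), ¬ Bijective (f.comp g)) :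
    mult A M X = 0 := by
  unfold mult
  rw [Module.length_eq_zero_iff, Submodule.Quotient.subsingleton_iff, eq_top_iff]
  intro f _ g hu
  exact h f g ((Module.End.isUnit_iff _).mp hu)

theorem mult_of_equiv {N : Type*} [AddCommGroup N] [Module A N] (e : M ≃ₗ[A] N) :
    mult A M X = mult A N X := by
  have e' : M ≃ₗ[A] N × PUnit.{1} := e.trans LinearEquiv.prodUnique.symm
  rw [mult_add (X := X) e']
  have : mult A PUnit.{1} X = 0 := by
    apply mult_eq_zero
    intro f g hb
    have : Subsingleton X := by
      have hg : Injective g := Function.Injective.of_comp (f := f) hb.1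
      exact hg.subsingleton
    have h2 : Nontrivial (Module.End A X) := inferInstance
    obtain ⟨a, b, hab⟩ := h2
    exact hab (LinearMap.ext fun x => Subsingleton.elim _ _)
  rw [this, add_zero]

theorem mult_ne_top [IsArtinian A M] [IsNoetherian A M] : mult A M X ≠ ⊤ := by
  -- induction over submodules of `M`
  have : ∀ N : Submodule A M, mult A N X ≠ ⊤ := by
    intro N
    induction N using WellFoundedLT.induction with
    | ind N ih =>
      by_cases h : ∀ (f : N →ₗ[A] X) (g : X →ₗ[A] N), ¬ Bijective (f.comp g)
      · rw [mult_eq_zero h]; simp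
      · push Not at h
        obtain ⟨f, g, hfg⟩ := h
        have hc := isCompl_retract f g hfg
        have hg : Injective g := Function.Injective.of_comp (f := f) hfg.1
        let e1 : X ≃ₗ[A] LinearMap.range g := LinearEquiv.ofInjective g hg
        let e2 : LinearMap.ker f ≃ₗ[A] (LinearMap.ker f).map N.subtype :=
          Submodule.equivMapOfInjective _ N.injective_subtype _
        have e : N ≃ₗ[A] X × ((LinearMap.ker f).map N.subtype : Submodule A M) :=
          (Submodule.prodEquivOfIsCompl _ _ hc).symm.trans (e1.symm.prodCongr e2)
        rw [mult_add (X := X) e, mult_self]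
        have hlt : (LinearMap.ker f).map N.subtype < N := by
          refine lt_of_le_of_ne (Submodule.map_subtype_le _ _) fun heq => ?_
          have hk : LinearMap.ker f = ⊤ := by
            rw [← Submodule.comap_map_eq_of_injective N.injective_subtype (LinearMap.ker f), heq]
            simp
          have hbot : f.comp g = 0 := by
            rw [LinearMap.ker_eq_top.mp hk, LinearMap.zero_comp]
          have hu : IsUnit (f.comp g : Module.End A X) := (Module.End.isUnit_iff _).mpr hfg
          rw [hbot] at hu
          exact not_isUnit_zero hu
        have := ih _ hlt
        simp [this]
  rw [← mult_of_equiv (X := X) (Submodule.topEquiv (R := A) (M := M))]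
  exact this ⊤

end general

end ITaux

namespace ITaux

section classes

variable {R : Type u} [Ring R] [IsArtinianRing Rᵐᵒᵖ]

instance (M : FGMod R) : IsNoetherian Rᵐᵒᵖ M := inferInstance
instance (M : FGMod R) : IsArtinian Rᵐᵒᵖ M := inferInstance

theorem local_of_indec {X : FGMod R} (hX : X.Indec) :
    IsLocalRing (Module.End Rᵐᵒᵖ X) := isLocalRing_end (M := X) hX

/-- The multiplicity homomorphism. -/
theorem exists_multHom (X : FGMod R) (hX : X.Indec) (hp : ¬ X.Proj) :
    ∃ F : ITK R →+ ℤ, F (ITcls R X) = 1 ∧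
      ∀ Y : FGMod R, Y.Indec → ¬ X.Iso Y → F (ITcls R Y) = 0 := by
  have := local_of_indec hX
  let m : FGMod R → ℤ := fun M => ((mult Rᵐᵒᵖ M X).toNat : ℤ)
  let F0 : FreeAbelianGroup (FGMod R) →+ ℤ := FreeAbelianGroup.lift m
  have hF0 : ∀ M, F0 (FreeAbelianGroup.of M) = m M := fun M => FreeAbelianGroup.lift_apply_of _ _
  have hle : AddSubgroup.closure (ITRel R) ≤ F0.ker := by
    rw [AddSubgroup.closure_le]
    rintro x (⟨A, B, C, ⟨e⟩, rfl⟩ | ⟨Q, hQ, rfl⟩)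
    · change F0 _ = 0
      rw [map_sub, map_sub, hF0, hF0, hF0]
      simp only [m]
      rw [mult_add (X := X) e, ENat.toNat_add mult_ne_top mult_ne_top]
      push_cast
      ring
    · change F0 _ = 0
      rw [hF0]
      simp only [m]
      rw [mult_eq_zero]
      · simp
      · intro f g hb
        apply hp
        have hQ' : Module.Projective Rᵐᵒᵖ Q := hQ
        let e := LinearEquiv.ofBijective (f.comp g) hb
        refine Module.Projective.of_split (M := Q) (g.comp e.symm.toLinearMap) f ?_
        ext x
        exact e.apply_symm_apply x
  refine ⟨QuotientAddGroup.lift _ F0 hle, ?_, ?_⟩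
  · change F0 _ = 1
    rw [hF0]
    simp only [m]
    rw [mult_self]; simp
  · intro Y hY hXY
    change F0 _ = 0
    rw [hF0]
    simp only [m]
    rw [mult_eq_zero]
    · simp
    · intro f g hb
      have := hX.1
      exact hXY (iso_of_retract (M := Y) hY f g hb)

theorem cls_add {A B C : FGMod R} (e : A ≃ₗ[Rᵐᵒᵖ] (B × C : Type u)) :
    ITcls R A = ITcls R B + ITcls R C := by
  have h : (QuotientAddGroup.mk (FreeAbelianGroup.of A - FreeAbelianGroup.of B
      - FreeAbelianGroup.of C) : ITK R) = 0 :=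
    (QuotientAddGroup.eq_zero_iff _).mpr
      (AddSubgroup.subset_closure (Or.inl ⟨A, B, C, ⟨e⟩, rfl⟩))
  have h2 : ITcls R A - ITcls R B - ITcls R C = 0 := h
  rw [sub_sub, sub_eq_zero] at h2
  exact h2

theorem cls_iso {A B : FGMod R} (e : A ≃ₗ[Rᵐᵒᵖ] B) : ITcls R A = ITcls R B := by
  let Z : FGMod R := ⟨PUnit.{u + 1}⟩
  have hZ : ITcls R Z = 0 :=
    (QuotientAddGroup.eq_zero_iff _).mpr (AddSubgroup.subset_closure
      (Or.inr ⟨Z, (inferInstance : Module.Projective Rᵐᵒᵖ PUnit.{u + 1}), rfl⟩))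
  have e' : A ≃ₗ[Rᵐᵒᵖ] (B × Z : Type u) :=
    e.trans (LinearEquiv.prodUnique (M₂ := PUnit.{u + 1})).symm
  rw [cls_add e', hZ, add_zero]

theorem summand_prod {M₁ M₂ N : FGMod R} (h₁ : M₁.Indec) (h₂ : M₂.Indec) (hN : N.Indec)
    (h : N.IsSummand (M₁.prod M₂)) : N.Iso M₁ ∨ N.Iso M₂ := by
  obtain ⟨A, B, hAB, ⟨e⟩⟩ := h
  have := local_of_indec hN
  have := hN.1
  let i : N →ₗ[Rᵐᵒᵖ] (M₁ × M₂ : Type u) := A.subtype.comp e.toLinearMap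
  let p : (M₁ × M₂ : Type u) →ₗ[Rᵐᵒᵖ] N := e.symm.toLinearMap.comp (A.projectionOnto B hAB)
  have hpi : ∀ x, p (i x) = x := by
    intro x
    apply e.injective
    exact (e.apply_symm_apply _).trans (Submodule.projectionOnto_apply_left hAB (e x))
  let f₁ : M₁ →ₗ[Rᵐᵒᵖ] N := p.comp (LinearMap.inl _ _ _)
  let f₂ : M₂ →ₗ[Rᵐᵒᵖ] N := p.comp (LinearMap.inr _ _ _)
  let g₁ : N →ₗ[Rᵐᵒᵖ] M₁ := (LinearMap.fst _ _ _).comp i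
  let g₂ : N →ₗ[Rᵐᵒᵖ] M₂ := (LinearMap.snd _ _ _).comp i
  have hsum : ((f₁.comp g₁ : Module.End Rᵐᵒᵖ N) + (f₂.comp g₂ : Module.End Rᵐᵒᵖ N)) = 1 := by
    ext x
    simp only [LinearMap.add_apply, LinearMap.comp_apply, f₁, f₂, g₁, g₂]
    rw [← map_add]
    refine Eq.trans ?_ (hpi x)
    congr 1
    ext <;> simp
  rcases IsLocalRing.isUnit_or_isUnit_of_add_one hsum with h | h
  · left
    exact iso_of_retract h₁ f₁ g₁ ((Module.End.isUnit_iff _).mp h)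
  · right
    exact iso_of_retract h₂ f₂ g₂ ((Module.End.isUnit_iff _).mp h)

theorem summand_left (M₁ M₂ : FGMod R) : M₁.IsSummand (M₁.prod M₂) := by
  refine ⟨LinearMap.range (LinearMap.inl Rᵐᵒᵖ M₁ M₂), LinearMap.range (LinearMap.inr Rᵐᵒᵖ M₁ M₂),
    LinearMap.isCompl_range_inl_inr, ⟨LinearEquiv.ofInjective _ LinearMap.inl_injective⟩⟩

theorem summand_right (M₁ M₂ : FGMod R) : M₂.IsSummand (M₁.prod M₂) := by
  refine ⟨LinearMap.range (LinearMap.inr Rᵐᵒᵖ M₁ M₂), LinearMap.range (LinearMap.inl Rᵐᵒᵖ M₁ M₂),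
    LinearMap.isCompl_range_inl_inr.symm, ⟨LinearEquiv.ofInjective _ LinearMap.inr_injective⟩⟩

theorem ITgen_prod {M₁ M₂ : FGMod R} (h₁ : M₁.Indec) (h₂ : M₂.Indec) (p₁ : ¬ M₁.Proj)
    (p₂ : ¬ M₂.Proj) :
    ITgen R (M₁.prod M₂) = AddSubgroup.closure {ITcls R M₁, ITcls R M₂} := by
  unfold ITgen
  congr 1
  ext x
  constructor
  · rintro ⟨N, hN, hi, -, rfl⟩
    rcases summand_prod h₁ h₂ hi hN with ⟨⟨e⟩⟩ | ⟨⟨e⟩⟩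
    · left; exact cls_iso e
    · right; exact cls_iso e
  · rintro (rfl | rfl)
    · exact ⟨M₁, summand_left _ _, h₁, p₁, rfl⟩
    · exact ⟨M₂, summand_right _ _, h₂, p₂, rfl⟩

theorem not_proj_quot {P M : FGMod R} (hind : P.Indec) (T : Submodule Rᵐᵒᵖ P) (h0 : T ≠ ⊥)
    (h1 : T ≠ ⊤) (e : M ≃ₗ[Rᵐᵒᵖ] (P.carrier ⧸ T)) : ¬ M.Proj := by
  intro hp
  have hp' : Module.Projective Rᵐᵒᵖ M := hp
  have hq : Module.Projective Rᵐᵒᵖ (P.carrier ⧸ T) := Module.Projective.of_equiv e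
  obtain ⟨s, hs⟩ := Module.projective_lifting_property T.mkQ LinearMap.id T.mkQ_surjective
  have hc := isCompl_retract T.mkQ s (by rw [hs]; exact Function.bijective_id)
  rw [Submodule.ker_mkQ] at hc
  rcases hind.2 _ _ hc with h | h
  · rw [h] at hc
    exact h1 (by simpa using hc.sup_eq_top)
  · exact h0 h

theorem syzygy_quot {P M : FGMod R} (hproj : P.Proj) (T : Submodule Rᵐᵒᵖ P)
    (hsup : ∀ N : Submodule Rᵐᵒᵖ P, N ⊔ T = ⊤ → N = ⊤)
    (e : M ≃ₗ[Rᵐᵒᵖ] (P.carrier ⧸ T)) : IsSyzygy M ⟨T⟩ := by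
  have hk : LinearMap.ker (e.symm.toLinearMap.comp T.mkQ) = T := by
    rw [LinearEquiv.ker_comp, Submodule.ker_mkQ]
  refine ⟨P, e.symm.toLinearMap.comp T.mkQ, ⟨hproj, ?_, ?_⟩, ?_⟩
  · exact e.symm.surjective.comp T.mkQ_surjective
  · rw [hk]; exact hsup
  · rw [hk]; exact ⟨LinearEquiv.refl _ _⟩

theorem one_le_phi (OmK : AddMonoid.End (ITK R)) (M : FGMod R) (x y s : ITK R)
    (hgen : ITgen R M = AddSubgroup.closure {x, y})
    (F G : ITK R →+ ℤ) (hFx : F x = 1) (hFy : F y = 0) (hGx : G x = 0) (hGy : G y = 1)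
    (hx : OmK x = s) (hy : OmK y = s + s) : 1 ≤ phiIT R OmK M := by
  let r : ℕ → ℕ := fun i =>
    rkIT R ((ITgen R M).map ((OmK ^ i : AddMonoid.End (ITK R)) : ITK R →+ ITK R))
  let H : ℕ → Submodule ℤ (ITK R) := fun i =>
    AddSubgroup.toIntSubmodule
      ((ITgen R M).map ((OmK ^ i : AddMonoid.End (ITK R)) : ITK R →+ ITK R))
  have hH : ∀ i, H i = Submodule.span ℤ {(OmK ^ i) x, (OmK ^ i) y} := by
    intro i
    simp only [H]
    have hmap : (AddSubgroup.closure {x, y}).map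
        ((OmK ^ i : AddMonoid.End (ITK R)) : ITK R →+ ITK R) =
        AddSubgroup.closure {(OmK ^ i) x, (OmK ^ i) y} :=
      (AddMonoidHom.map_closure _ _).trans (by rw [Set.image_pair]; rfl)
    rw [hgen, hmap]
    apply le_antisymm
    · intro z hz
      have : AddSubgroup.closure {(OmK ^ i) x, (OmK ^ i) y} ≤
        (Submodule.span ℤ {(OmK ^ i) x, (OmK ^ i) y}).toAddSubgroup := by
        rw [AddSubgroup.closure_le]
        exact Submodule.subset_span
      exact this hz
    · rw [Submodule.span_le]
      exact AddSubgroup.subset_closure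
  have hr : ∀ i, r i = Module.finrank ℤ (H i) := fun i => rfl
  have hfin : ∀ i, Module.Finite ℤ (H i) := by
    intro i
    rw [hH]
    exact Module.Finite.span_of_finite ℤ (by simp)
  have hstep : ∀ i, r (i + 1) ≤ r i := by
    intro i
    have hm : H (i + 1) = (H i).map OmK.toIntLinearMap := by
      rw [hH, hH, Submodule.map_span, Set.image_pair, pow_succ']
      rfl
    rw [hr, hr, hm]
    have := hfin i
    exact Submodule.finrank_map_le _ _
  have hanti : Antitone r := antitone_nat_of_succ_le hstep
  have h0 : r 0 = 2 := by
    have hli : LinearIndependent ℤ ![x, y] := by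
      rw [LinearIndependent.pair_iff]
      intro a b hab
      constructor
      · simpa [hFx, hFy] using congrArg F hab
      · simpa [hGx, hGy] using congrArg G hab
    rw [hr, hH]
    have := finrank_span_eq_card hli
    have hrange : Set.range ![x, y] = {x, y} := Matrix.range_cons_cons_empty x y ![]
    rw [hrange] at this
    exact this.trans (by simp)
  have h1 : r 1 ≤ 1 := by
    rw [hr, hH, pow_one, hx, hy]
    have : Submodule.span ℤ {s, s + s} = Submodule.span ℤ {s} := by
      apply le_antisymm
      · rw [Submodule.span_le]
        have hs := Submodule.mem_span_singleton_self (R := ℤ) s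
        rintro z (rfl | rfl)
        · exact hs
        · exact Submodule.add_mem _ hs hs
      · exact Submodule.span_mono (by simp)
    rw [this]
    exact (finrank_span_le_card ({s} : Set (ITK R))).trans (by simp)
  have hmem : phiIT R OmK M ∈ {n | ∀ i, n ≤ i → r i = r n} := by
    apply Nat.sInf_mem
    refine ⟨Function.argmin r, fun i hi => ?_⟩
    exact le_antisymm (hanti hi) (Function.argmin_le r i)
  by_contra hlt
  have hz : phiIT R OmK M = 0 := by omega
  rw [hz] at hmem
  have := hmem 1 (by omega)
  omega

end classes

end ITaux

/-- If an indecomposable projective `P` contains a submodule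
isomorphic to `S ⊕ S` for a simple `S` in its socle (two distinct simple submodules
`T₁, T₂` both isomorphic to `S`), then `P/S` and `P/(S ⊕ S)` are non-isomorphic
indecomposable modules and `φ(M₁ ⊕ M₂) ≥ 1`. -/
theorem phi_ge_one_of_two_iso_simples_in_socle (R : Type u) [Ring R]
    [IsArtinianRing Rᵐᵒᵖ]
    (OmK : AddMonoid.End (ITK R)) (hOm : IsSyzygyEnd R OmK)
    (P : FGMod R) (hind : P.Indec) (hproj : P.Proj)
    (S : Type u) [AddCommGroup S] [Module Rᵐᵒᵖ S] (hS : IsSimpleModule Rᵐᵒᵖ S)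
    (T₁ T₂ : Submodule Rᵐᵒᵖ P)
    (hT₁ : Nonempty (T₁ ≃ₗ[Rᵐᵒᵖ] S)) (hT₂ : Nonempty (T₂ ≃ₗ[Rᵐᵒᵖ] S))
    (hne : T₁ ≠ T₂)
    (M₁ M₂ : FGMod R)
    (hM₁ : Nonempty (M₁ ≃ₗ[Rᵐᵒᵖ] (P.carrier ⧸ T₁)))
    (hM₂ : Nonempty (M₂ ≃ₗ[Rᵐᵒᵖ] (P.carrier ⧸ (T₁ ⊔ T₂)))) :
    M₁.Indec ∧ M₂.Indec ∧ ¬ M₁.Iso M₂ ∧ 1 ≤ phiIT R OmK (M₁.prod M₂) := by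
  obtain ⟨i₁⟩ := hT₁
  obtain ⟨i₂⟩ := hT₂
  obtain ⟨e₁⟩ := hM₁
  obtain ⟨e₂⟩ := hM₂
  have hs₁ : IsSimpleModule Rᵐᵒᵖ T₁ := IsSimpleModule.congr i₁
  have hs₂ : IsSimpleModule Rᵐᵒᵖ T₂ := IsSimpleModule.congr i₂
  have ha₁ : IsAtom T₁ := isSimpleModule_iff_isAtom.mp hs₁
  have ha₂ : IsAtom T₂ := isSimpleModule_iff_isAtom.mp hs₂
  have hdis : Disjoint T₁ T₂ := ha₁.disjoint_of_ne ha₂ hne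
  have hlt : T₁ < T₁ ⊔ T₂ := by
    refine lt_of_le_of_ne le_sup_left fun h => ?_
    have h2 : T₂ ≤ T₁ := by rw [h]; exact le_sup_right
    exact ha₂.1 (hdis.symm.eq_bot_of_le h2)
  have htop : T₁ ⊔ T₂ ≠ ⊤ := by
    intro h
    rcases hind.2 T₁ T₂ ⟨hdis, codisjoint_iff.mpr h⟩ with h | h
    · exact ha₁.1 h
    · exact ha₂.1 h
  have htop₁ : T₁ ≠ ⊤ := (hlt.trans_le le_top).ne
  have hloc := ITaux.local_of_indec hind
  have hproj' : Module.Projective Rᵐᵒᵖ P := hproj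
  have hhol := ITaux.hollow (A := Rᵐᵒᵖ) (M := P)
  have hI₁ : M₁.Indec := ITaux.Ind.of_equiv e₁ (ITaux.ind_quotient hhol T₁ htop₁)
  have hI₂ : M₂.Indec := ITaux.Ind.of_equiv e₂ (ITaux.ind_quotient hhol (T₁ ⊔ T₂) htop)
  have hp₁ : ¬ M₁.Proj := ITaux.not_proj_quot hind T₁ ha₁.1 htop₁ e₁
  have hp₂ : ¬ M₂.Proj :=
    ITaux.not_proj_quot hind (T₁ ⊔ T₂) (bot_lt_iff_ne_bot.mp (bot_le.trans_lt hlt)) htop e₂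
  have hniso : ¬ M₁.Iso M₂ := by
    rintro ⟨e⟩
    let q : (P.carrier ⧸ T₁) →ₗ[Rᵐᵒᵖ] (P.carrier ⧸ (T₁ ⊔ T₂)) := Submodule.factor hlt.le
    let k : (P.carrier ⧸ T₁) →ₗ[Rᵐᵒᵖ] (P.carrier ⧸ T₁) :=
      ((e₂.symm.trans e.symm).trans e₁).toLinearMap.comp q
    have hk : Surjective k :=
      ((e₂.symm.trans e.symm).trans e₁).surjective.comp (Submodule.factor_surjective hlt.le)
    have hki : Injective k := IsNoetherian.injective_of_surjective_endomorphism k hk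
    have hq : Injective q := fun a b hab =>
      hki (congrArg ((e₂.symm.trans e.symm).trans e₁) hab)
    apply hlt.not_ge
    intro x hx
    have : T₁.mkQ x = 0 := by
      apply hq
      rw [map_zero]
      simpa [q] using hx
    simpa using this
  refine ⟨hI₁, hI₂, hniso, ?_⟩
  have hsy₁ := ITaux.syzygy_quot (M := M₁) hproj T₁
    (fun N hN => (hhol N T₁ hN).resolve_right htop₁) e₁
  have hsy₂ := ITaux.syzygy_quot (M := M₂) hproj (T₁ ⊔ T₂)
    (fun N hN => (hhol N _ hN).resolve_right htop) e₂
  obtain ⟨F, hF1, hF0⟩ := ITaux.exists_multHom M₁ hI₁ hp₁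
  obtain ⟨G, hG1, hG0⟩ := ITaux.exists_multHom M₂ hI₂ hp₂
  let j : (T₁ × T₂) →ₗ[Rᵐᵒᵖ] (T₁ ⊔ T₂ : Submodule Rᵐᵒᵖ P) :=
    (Submodule.inclusion le_sup_left).coprod (Submodule.inclusion le_sup_right)
  have hj : Bijective j := by
    constructor
    · rw [← LinearMap.ker_eq_bot, LinearMap.ker_eq_bot']
      rintro ⟨a, b⟩ hab
      have h1 : (a : P.carrier) + b = 0 := congrArg Subtype.val hab
      have h2 : (a : P.carrier) ∈ T₂ := by
        rw [eq_neg_of_add_eq_zero_left h1]; exact T₂.neg_mem b.2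
      have h3 : (a : P.carrier) = 0 := Submodule.disjoint_def.mp hdis _ a.2 h2
      rw [h3, zero_add] at h1
      ext
      · exact h3
      · exact h1
    · rintro ⟨z, hz⟩
      obtain ⟨a, ha, b, hb, rfl⟩ := Submodule.mem_sup.mp hz
      exact ⟨(⟨a, ha⟩, ⟨b, hb⟩), rfl⟩
  let e12 : (T₁ ⊔ T₂ : Submodule Rᵐᵒᵖ P) ≃ₗ[Rᵐᵒᵖ] (T₁ × T₂) := (LinearEquiv.ofBijective j hj).symm
  have hc : ITcls R ⟨(T₁ ⊔ T₂ : Submodule Rᵐᵒᵖ P)⟩ = ITcls R ⟨T₁⟩ + ITcls R ⟨T₁⟩ := by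
    rw [ITaux.cls_add (A := ⟨(T₁ ⊔ T₂ : Submodule Rᵐᵒᵖ P)⟩) (B := ⟨T₁⟩) (C := ⟨T₂⟩) e12]
    rw [ITaux.cls_iso (A := ⟨T₂⟩) (B := ⟨T₁⟩) (i₂.trans i₁.symm)]
  exact ITaux.one_le_phi OmK _ (ITcls R M₁) (ITcls R M₂) (ITcls R ⟨T₁⟩)
    (ITaux.ITgen_prod hI₁ hI₂ hp₁ hp₂) F G hF1 (hF0 M₂ hI₂ hniso)
    (hG0 M₁ hI₁ fun ⟨e⟩ => hniso ⟨e.symm⟩) hG1 (hOm _ _ hsy₁) ((hOm _ _ hsy₂).trans hc)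
end
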